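/- arXiv:0912.5263 — 3 statements merged into one kernel-verified Lean document; each statement's English description precedes it below -/
import Mathlib

section
/- In the language L_sq, every bispecial word of the form 2ⁿ has multiplicity i(2ⁿ) = 1 and every bispecial word of the form 2ⁿ 1 2ⁿ has multiplicity i(2ⁿ 1 2ⁿ) = −1; consequently b(n) + b(n+1) = 1 for every n ≥ 0 (b(n) = 1 for n even and b(n) = 0 for n odd). -/
/-!
Position `j` of `(1·2ᵐ)^ω` carries `1` exactly when `m + 1 ∣ j`, so a word lies in `L_sq` iff it
is read off some such pattern from some starting position (`mem_Lsq_iff`). The key point is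
rigidity (`letter_rigid`): two patterns that agree on a window in which `1` occurs twice coincide
everywhere, because the larger period is at most the distance between the two occurrences, hence
the smaller period forces a `1` inside the window. So a word with two `1`s has
at most one left extension and at most one right extension (`left_unique`, `right_unique`).

Consequently `1 2ⁿ 1 2ⁿ 1 ∈ L_sq` excludes `1 2ⁿ 1 2ⁿ 2` and `2 2ⁿ 1 2ⁿ 1`, which gives
`i(2ⁿ 1 2ⁿ) = 2 - 2 - 2 + 1 = -1`, while all four extensions of `2ⁿ` occur and
`i(2ⁿ) = 4 - 2 - 2 + 1 = 1`. The same facts show that bispecial words contain at most one `1`, and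
that `2ᵃ 1 2ᵇ` is bispecial only for `a = b` (`bispecial_classify`). Hence `b(n)` is `1` for even
`n`, where only `2ⁿ` contributes, and `1 - 1 = 0` for `n = 2k + 1`, where `2ᵏ 1 2ᵏ` contributes too.
-/

/-- `powWord w k` is the word `w` concatenated `k` times. -/
def powWord {A : Type*} (w : List A) (k : ℕ) : List A := (List.replicate k w).flatten

/-- `v` is a factor of the one-sided infinite periodic word `w^ω`. -/
def IsFactorPer {A : Type*} (w v : List A) : Prop := ∃ k, v <:+: powWord w k

/-- The number of left extensions of `v` inside `L`. -/
noncomputable def mL {A : Type*} (L : Set (List A)) (v : List A) : ℕ := {a : A | a :: v ∈ L}.ncard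

/-- The number of right extensions of `v` inside `L`. -/
noncomputable def mR {A : Type*} (L : Set (List A)) (v : List A) : ℕ := {b : A | v ++ [b] ∈ L}.ncard

/-- The number of two-sided extensions of `v` inside `L`. -/
noncomputable def mB {A : Type*} (L : Set (List A)) (v : List A) : ℕ :=
  {p : A × A | p.1 :: (v ++ [p.2]) ∈ L}.ncard

/-- A word of `L` is bispecial if it has at least two left and two right extensions. -/
def Bispecial {A : Type*} (L : Set (List A)) (v : List A) : Prop :=
  v ∈ L ∧ 2 ≤ mL L v ∧ 2 ≤ mR L v

/-- The multiplicity `i(v) = m_b(v) - m_l(v) - m_r(v) + 1` of a word. -/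
noncomputable def mult {A : Type*} (L : Set (List A)) (v : List A) : ℤ :=
  (mB L v : ℤ) - (mL L v : ℤ) - (mR L v : ℤ) + 1

/-- `b(n)`: the sum of the multiplicities of the bispecial words of length `n`. -/
noncomputable def bfun {A : Type*} (L : Set (List A)) (n : ℕ) : ℤ :=
  ∑ᶠ v ∈ {v : List A | Bispecial L v ∧ v.length = n}, mult L v

/-- The complexity `p(n)`: the number of words of length `n` in `L`. -/
noncomputable def comp {A : Type*} (L : Set (List A)) (n : ℕ) : ℕ :=
  {v : List A | v ∈ L ∧ v.length = n}.ncard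

/-- `L_sq`: the factors of the periodic words `(1·2ⁿ)^ω`, `n ∈ ℕ`, over the alphabet `{1,2}`. -/
def Lsq : Set (List ℕ) := {v | ∃ n : ℕ, IsFactorPer (1 :: List.replicate n 2) v}

/-! ### Positionwise description of `L_sq` -/

/-- The letter at position `j` (counted from `0`) of the infinite word `(1·2ᵐ)^ω`. -/
def letter (m j : ℕ) : ℕ := if (m + 1) ∣ j then 1 else 2

lemma letter_eq_one {m j : ℕ} : letter m j = 1 ↔ (m + 1) ∣ j := by
  unfold letter; split_ifs <;> simp_all

lemma letter_congr {m m' j j' : ℕ} (h : (m + 1) ∣ j ↔ (m' + 1) ∣ j') :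
    letter m j = letter m' j' := by
  unfold letter; simp [h]

lemma powWord_eq (m k : ℕ) :
    powWord (1 :: List.replicate m 2) k = (List.range (k * (m + 1))).map (letter m) := by
  induction k with
  | zero => simp [powWord]
  | succ k ih =>
    have h1 : powWord (1 :: List.replicate m 2) (k + 1)
        = powWord (1 :: List.replicate m 2) k ++ (1 :: List.replicate m 2) := by
      simp [powWord, List.replicate_succ']
    rw [h1, ih, Nat.succ_mul, List.range_add, List.map_append]
    congr 1
    apply List.ext_getElem
    · simp
    · intro i h2 h3
      simp only [List.getElem_map, List.getElem_range]
      have h4 : (m + 1) ∣ k * (m + 1) + i ↔ (m + 1) ∣ i :=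
        (Nat.dvd_add_iff_right (Dvd.intro_left k rfl)).symm
      cases i with
      | zero => simp [letter]
      | succ i =>
        have h5 : ¬ (m + 1) ∣ i + 1 := by
          intro h
          have := Nat.le_of_dvd (by omega) h
          simp at h2
          omega
        simp [letter, h4, h5]

/-- Membership in `Lsq` read off positionwise: `m` is the number of `2`s per period and `s` the
starting position. -/
lemma mem_Lsq_iff {v : List ℕ} :
    v ∈ Lsq ↔ ∃ m s, ∀ i (h : i < v.length), v[i] = letter m (i + s) := by
  constructor
  · rintro ⟨m, k, h⟩
    rw [powWord_eq, List.infix_iff_getElem?] at h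
    obtain ⟨s, hs, h⟩ := h
    refine ⟨m, s, fun i hi => ?_⟩
    have := h i hi
    simp only [List.length_map, List.length_range] at hs
    rw [List.getElem?_map, List.getElem?_range (by omega)] at this
    simpa using this.symm
  · rintro ⟨m, s, h⟩
    refine ⟨m, v.length + s, ?_⟩
    rw [powWord_eq, List.infix_iff_getElem?]
    have hl : v.length + s ≤ (v.length + s) * (m + 1) := Nat.le_mul_of_pos_right _ (by omega)
    refine ⟨s, by simpa using hl, fun i hi => ?_⟩
    rw [List.getElem?_map, List.getElem?_range (by omega)]
    simp [h i hi]

lemma Lsq_infix {u v : List ℕ} (h : u <:+: v) (hv : v ∈ Lsq) : u ∈ Lsq := by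
  obtain ⟨m, k, hk⟩ := hv
  exact ⟨m, k, h.trans hk⟩

lemma Lsq_letters {v : List ℕ} (hv : v ∈ Lsq) {a : ℕ} (ha : a ∈ v) : a = 1 ∨ a = 2 := by
  obtain ⟨m, s, h⟩ := mem_Lsq_iff.1 hv
  obtain ⟨i, hi, rfl⟩ := List.getElem_of_mem ha
  rw [h]
  unfold letter
  split_ifs <;> simp

/-! ### Rigidity -/

/-- The period visible on a window with two `1`s cannot be exceeded by another pattern agreeing on
that window. -/
lemma period_le {m s m' s' p q : ℕ}
    (h : ∀ i, p ≤ i → i ≤ q → letter m (i + s) = letter m' (i + s'))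
    (hpq : p < q) (hp : letter m (p + s) = 1) (hq : letter m (q + s) = 1) : m' ≤ m := by
  by_contra! hlt
  have hp' := h p le_rfl hpq.le ▸ hp
  have hq' := h q hpq.le le_rfl ▸ hq
  rw [letter_eq_one] at hp hp' hq'
  have h1 : (m' + 1) ∣ q - p := by
    have := Nat.dvd_sub hq' hp'
    rwa [show q + s' - (p + s') = q - p by omega] at this
  have h2 := Nat.le_of_dvd (by omega) h1
  -- The pattern of `m` has a `1` at `p + m + 1 < q`, where that of `m'` has a `2`.
  have h3 : letter m (p + (m + 1) + s) = 1 := by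
    rw [letter_eq_one, show p + (m + 1) + s = p + s + (m + 1) by omega]
    exact Dvd.dvd.add hp dvd_rfl
  rw [h _ (by omega) (by omega), letter_eq_one] at h3
  have h4 := Nat.dvd_sub h3 hp'
  rw [show p + (m + 1) + s' - (p + s') = m + 1 by omega] at h4
  have := Nat.le_of_dvd (by omega) h4
  omega

lemma letter_rigid {m s m' s' p q : ℕ}
    (h : ∀ i, p ≤ i → i ≤ q → letter m (i + s) = letter m' (i + s'))
    (hpq : p < q) (hp : letter m (p + s) = 1) (hq : letter m (q + s) = 1) (i : ℕ) :
    letter m (i + s) = letter m' (i + s') := by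
  have hp' := h p le_rfl hpq.le ▸ hp
  have hq' := h q hpq.le le_rfl ▸ hq
  have e : m = m' := le_antisymm
    (period_le (fun i h1 h2 => (h i h1 h2).symm) hpq hp' hq') (period_le h hpq hp hq)
  subst e
  rw [letter_eq_one] at hp hp'
  apply letter_congr
  zify at hp hp' ⊢
  rw [show (i : ℤ) + s = (i - p) + (p + s) by ring, show (i : ℤ) + s' = (i - p) + (p + s') by ring,
    dvd_add_left hp, dvd_add_left hp']

lemma right_unique {x y z : List ℕ} {a b : ℕ}
    (ha : (x ++ 1 :: (y ++ 1 :: z)) ++ [a] ∈ Lsq) (hb : (x ++ 1 :: (y ++ 1 :: z)) ++ [b] ∈ Lsq) :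
    a = b := by
  obtain ⟨m, s, h⟩ := mem_Lsq_iff.1 ha
  obtain ⟨m', s', h'⟩ := mem_Lsq_iff.1 hb
  have hp : (x ++ 1 :: (y ++ 1 :: z))[x.length]? = some 1 := by simp
  have hq : (x ++ 1 :: (y ++ 1 :: z))[x.length + (y.length + 1)]? = some 1 := by
    rw [List.getElem?_append_right (by omega)]; simp
  generalize x ++ 1 :: (y ++ 1 :: z) = u at *
  obtain ⟨hp1, hp⟩ := List.getElem?_eq_some_iff.1 hp
  obtain ⟨hq1, hq⟩ := List.getElem?_eq_some_iff.1 hq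
  have g : ∀ i (hi : i < u.length), u[i] = letter m (i + s) := fun i hi => by
    rw [← h i (by simp; omega), List.getElem_append_left hi]
  have g' : ∀ i (hi : i < u.length), u[i] = letter m' (i + s') := fun i hi => by
    rw [← h' i (by simp; omega), List.getElem_append_left hi]
  have key := letter_rigid (m := m) (m' := m') (s := s) (s' := s') (p := x.length)
    (q := x.length + (y.length + 1))
    (fun i _ hi => by rw [← g i (by omega), g' i (by omega)]) (by omega)
    (by rw [← g _ hp1, hp]) (by rw [← g _ hq1, hq]) u.length
  rw [← h _ (by simp), ← h' _ (by simp)] at key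
  simpa using key

lemma left_unique {x y z : List ℕ} {a b : ℕ}
    (ha : a :: (x ++ 1 :: (y ++ 1 :: z)) ∈ Lsq) (hb : b :: (x ++ 1 :: (y ++ 1 :: z)) ∈ Lsq) :
    a = b := by
  obtain ⟨m, s, h⟩ := mem_Lsq_iff.1 ha
  obtain ⟨m', s', h'⟩ := mem_Lsq_iff.1 hb
  have hp : (x ++ 1 :: (y ++ 1 :: z))[x.length]? = some 1 := by simp
  have hq : (x ++ 1 :: (y ++ 1 :: z))[x.length + (y.length + 1)]? = some 1 := by
    rw [List.getElem?_append_right (by omega)]; simp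
  generalize x ++ 1 :: (y ++ 1 :: z) = u at *
  obtain ⟨hp1, hp⟩ := List.getElem?_eq_some_iff.1 hp
  obtain ⟨hq1, hq⟩ := List.getElem?_eq_some_iff.1 hq
  have g : ∀ i (hi : i < u.length), u[i] = letter m (i + 1 + s) := fun i hi => by
    rw [← h (i + 1) (by simp; omega), List.getElem_cons_succ]
  have g' : ∀ i (hi : i < u.length), u[i] = letter m' (i + 1 + s') := fun i hi => by
    rw [← h' (i + 1) (by simp; omega), List.getElem_cons_succ]
  have key := letter_rigid (m := m) (m' := m') (s := s) (s' := s') (p := x.length + 1)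
    (q := x.length + (y.length + 1) + 1)
    (fun i h1 hi => by
      obtain ⟨j, rfl⟩ : ∃ j, i = j + 1 := ⟨i - 1, by omega⟩
      rw [← g j (by omega), g' j (by omega)]) (by omega)
    (by rw [← g _ hp1, hp]) (by rw [← g _ hq1, hq]) 0
  rw [← h _ (by simp), ← h' _ (by simp)] at key
  simpa using key

/-! ### Extensions of `2ⁿ` and `2ⁿ 1 2ⁿ` -/

lemma mem_one_one (n : ℕ) :
    1 :: ((List.replicate n 2 ++ 1 :: List.replicate n 2) ++ [1]) ∈ Lsq :=
  ⟨n, 3, [], List.replicate n 2, by simp [powWord, List.replicate_succ]⟩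

lemma mem_two_two (n : ℕ) :
    2 :: ((List.replicate n 2 ++ 1 :: List.replicate n 2) ++ [2]) ∈ Lsq :=
  ⟨n + 1, 2, [1], [], by
    rw [show List.replicate (n + 1) 2 = 2 :: List.replicate n 2 from rfl]
    simp [powWord, List.replicate_succ, ← List.replicate_succ']⟩

lemma not_mem_one_two (n : ℕ) :
    1 :: ((List.replicate n 2 ++ 1 :: List.replicate n 2) ++ [2]) ∉ Lsq := fun h => by
  have := right_unique (x := []) (y := List.replicate n 2) (z := List.replicate n 2)
    (a := 1) (b := 2) (by simpa using mem_one_one n) (by simpa using h)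
  omega

lemma not_mem_two_one (n : ℕ) :
    2 :: ((List.replicate n 2 ++ 1 :: List.replicate n 2) ++ [1]) ∉ Lsq := fun h => by
  have := left_unique (x := List.replicate n 2) (y := List.replicate n 2) (z := [])
    (a := 1) (b := 2) (by simpa using mem_one_one n) (by simpa using h)
  omega

lemma ncard_left {v : List ℕ} (h1 : 1 :: v ∈ Lsq) (h2 : 2 :: v ∈ Lsq) : mL Lsq v = 2 := by
  have : {a : ℕ | a :: v ∈ Lsq} = {1, 2} := by
    ext a
    constructor
    · intro h
      simpa using Lsq_letters h (a := a) (by simp)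
    · rintro (rfl | rfl) <;> assumption
  rw [mL, this, Set.ncard_pair (by norm_num)]

lemma ncard_right {v : List ℕ} (h1 : v ++ [1] ∈ Lsq) (h2 : v ++ [2] ∈ Lsq) : mR Lsq v = 2 := by
  have : {a : ℕ | v ++ [a] ∈ Lsq} = {1, 2} := by
    ext a
    constructor
    · intro h
      simpa using Lsq_letters h (a := a) (by simp)
    · rintro (rfl | rfl) <;> assumption
  rw [mR, this, Set.ncard_pair (by norm_num)]

lemma two_sided_letters {v : List ℕ} {a b : ℕ} (h : a :: (v ++ [b]) ∈ Lsq) :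
    (a = 1 ∨ a = 2) ∧ (b = 1 ∨ b = 2) :=
  ⟨Lsq_letters h (by simp), Lsq_letters h (by simp)⟩

lemma Lsq_left {v : List ℕ} {a b : ℕ} (h : a :: (v ++ [b]) ∈ Lsq) : a :: v ∈ Lsq :=
  Lsq_infix ⟨[], [b], by simp⟩ h

lemma Lsq_right {v : List ℕ} {a b : ℕ} (h : a :: (v ++ [b]) ∈ Lsq) : v ++ [b] ∈ Lsq :=
  Lsq_infix ⟨[a], [], by simp⟩ h

lemma twos_ext (n : ℕ) {a b : ℕ} (ha : a = 1 ∨ a = 2) (hb : b = 1 ∨ b = 2) :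
    a :: (List.replicate n 2 ++ [b]) ∈ Lsq := by
  rcases ha with rfl | rfl <;> rcases hb with rfl | rfl
  · exact Lsq_infix ⟨[], List.replicate n 2 ++ [1], by simp⟩ (mem_one_one n)
  · exact Lsq_infix ⟨2 :: List.replicate n 2, [], by simp⟩ (mem_two_two n)
  · exact Lsq_infix ⟨[], List.replicate n 2 ++ [2], by simp⟩ (mem_two_two n)
  · exact ⟨n + 2, 1, [1], [], by simp [powWord, List.replicate_succ, ← List.replicate_succ']⟩

lemma twos_props (n : ℕ) :
    Bispecial Lsq (List.replicate n 2) ∧ mult Lsq (List.replicate n 2) = 1 := by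
  have e11 := twos_ext n (a := 1) (b := 1) (by simp) (by simp)
  have e22 := twos_ext n (a := 2) (b := 2) (by simp) (by simp)
  have hl := ncard_left (Lsq_left e11) (Lsq_left e22)
  have hr := ncard_right (Lsq_right e11) (Lsq_right e22)
  have hb : mB Lsq (List.replicate n 2) = 4 := by
    have : {p : ℕ × ℕ | p.1 :: (List.replicate n 2 ++ [p.2]) ∈ Lsq}
        = (({1, 2} ×ˢ {1, 2} : Finset (ℕ × ℕ)) : Set (ℕ × ℕ)) := by
      ext ⟨a, b⟩
      simp only [Set.mem_ofPred_eq, Finset.coe_product, Set.mem_prod, Finset.mem_coe,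
        Finset.mem_insert, Finset.mem_singleton]
      exact ⟨two_sided_letters, fun h => twos_ext n h.1 h.2⟩
    rw [mB, this, Set.ncard_coe_finset]
    rfl
  refine ⟨⟨Lsq_infix ⟨[1], [1], by simp⟩ e11, hl.ge, hr.ge⟩, ?_⟩
  rw [mult, hb, hl, hr]
  norm_num

lemma mid_props (n : ℕ) :
    Bispecial Lsq (List.replicate n 2 ++ 1 :: List.replicate n 2) ∧
      mult Lsq (List.replicate n 2 ++ 1 :: List.replicate n 2) = -1 := by
  have e11 := mem_one_one n
  have e22 := mem_two_two n
  have e12 := not_mem_one_two n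
  have e21 := not_mem_two_one n
  generalize List.replicate n 2 ++ 1 :: List.replicate n 2 = v at *
  have hl := ncard_left (Lsq_left e11) (Lsq_left e22)
  have hr := ncard_right (Lsq_right e11) (Lsq_right e22)
  have hb : mB Lsq v = 2 := by
    have : {p : ℕ × ℕ | p.1 :: (v ++ [p.2]) ∈ Lsq} = {(1, 1), (2, 2)} := by
      ext ⟨a, b⟩
      simp only [Set.mem_ofPred_eq, Set.mem_insert_iff, Set.mem_singleton_iff, Prod.mk.injEq]
      constructor
      · intro h
        obtain ⟨rfl | rfl, rfl | rfl⟩ := two_sided_letters h <;> simp_all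
      · rintro (⟨rfl, rfl⟩ | ⟨rfl, rfl⟩) <;> assumption
    rw [mB, this, Set.ncard_pair (by simp)]
  refine ⟨⟨Lsq_infix ⟨[1], [1], by simp⟩ e11, hl.ge, hr.ge⟩, ?_⟩
  rw [mult, hb, hl, hr]
  norm_num

/-! ### Classification of the bispecial words -/

/-- A subset of `{1, 2}` with at least two elements contains both. -/
lemma both_of_two_le {S : Set ℕ} (hS : S ⊆ {1, 2}) (h : 2 ≤ S.ncard) : 1 ∈ S ∧ 2 ∈ S := by
  have : S = {1, 2} := Set.eq_of_subset_of_ncard_le hS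
    (by rw [Set.ncard_pair (by norm_num)]; exact h) (by simp)
  simp [this]

lemma eq_twos {v : List ℕ} (hv : ∀ a ∈ v, a = 1 ∨ a = 2) (h : 1 ∉ v) :
    v = List.replicate v.length 2 :=
  List.eq_replicate_of_mem fun a ha => (hv a ha).resolve_left (by rintro rfl; exact h ha)

lemma bispecial_classify {v : List ℕ} (hv : Bispecial Lsq v) :
    (∃ n, v = List.replicate n 2) ∨
      ∃ n, v = List.replicate n 2 ++ 1 :: List.replicate n 2 := by
  obtain ⟨hv, hl, hr⟩ := hv
  obtain ⟨l1, l2⟩ := both_of_two_le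
    (fun a (h : a :: v ∈ Lsq) => by simpa using Lsq_letters h (a := a) (by simp)) hl
  obtain ⟨r1, r2⟩ := both_of_two_le
    (fun a (h : v ++ [a] ∈ Lsq) => by simpa using Lsq_letters h (a := a) (by simp)) hr
  have hlet : ∀ a ∈ v, a = 1 ∨ a = 2 := fun a ha => Lsq_letters hv ha
  by_cases h1 : 1 ∈ v
  · right
    obtain ⟨x, t, rfl, hx⟩ := List.eq_append_cons_of_mem h1
    have ht : 1 ∉ t := fun ht => by
      obtain ⟨y, z, rfl⟩ := List.append_of_mem ht
      have := left_unique l1 l2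
      omega
    have ex := eq_twos (fun a ha => hlet a (by simp [ha])) hx
    have et := eq_twos (fun a ha => hlet a (by simp [ha])) ht
    generalize x.length = a at ex
    generalize t.length = b at et
    subst ex et
    refine ⟨a, ?_⟩
    rcases lt_trichotomy a b with hab | rfl | hab
    · -- `1 2ᵃ 1 2ᵇ` has the forbidden prefix `1 2ᵃ 1 2ᵃ 2`.
      obtain ⟨c, rfl⟩ : ∃ c, b = a + (1 + c) := ⟨b - a - 1, by omega⟩
      exact absurd (Lsq_infix ⟨[], List.replicate c 2, by
        simp [List.replicate_add]⟩ l1) (not_mem_one_two a)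
    · rfl
    · -- `2ᵃ 1 2ᵇ 1` has the forbidden suffix `2 2ᵇ 1 2ᵇ 1`.
      obtain ⟨c, rfl⟩ : ∃ c, a = c + (1 + b) := ⟨a - b - 1, by omega⟩
      exact absurd (Lsq_infix ⟨List.replicate c 2, [], by
        simp [List.replicate_add]⟩ r1) (not_mem_two_one b)
  · exact Or.inl ⟨_, eq_twos hlet h1⟩

lemma bfun_even (n : ℕ) (hn : Even n) : bfun Lsq n = 1 := by
  have : {v : List ℕ | Bispecial Lsq v ∧ v.length = n} = {List.replicate n 2} := by
    ext v
    simp only [Set.mem_ofPred_eq, Set.mem_singleton_iff]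
    constructor
    · rintro ⟨h, rfl⟩
      obtain ⟨k, rfl⟩ | ⟨k, rfl⟩ := bispecial_classify h
      · simp
      · obtain ⟨j, hj⟩ := hn
        simp at hj
        omega
    · rintro rfl
      exact ⟨(twos_props n).1, by simp⟩
  rw [bfun, this, finsum_mem_singleton, (twos_props n).2]

lemma bfun_odd (n : ℕ) (hn : Odd n) : bfun Lsq n = 0 := by
  obtain ⟨k, rfl⟩ := hn
  have : {v : List ℕ | Bispecial Lsq v ∧ v.length = 2 * k + 1}
      = {List.replicate (2 * k + 1) 2, List.replicate k 2 ++ 1 :: List.replicate k 2} := by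
    ext v
    simp only [Set.mem_ofPred_eq, Set.mem_insert_iff, Set.mem_singleton_iff]
    constructor
    · rintro ⟨h, hlen⟩
      obtain ⟨j, rfl⟩ | ⟨j, rfl⟩ := bispecial_classify h
      · left
        rw [List.length_replicate] at hlen
        rw [hlen]
      · right
        obtain rfl : j = k := by simp at hlen; omega
        rfl
    · rintro (rfl | rfl)
      · exact ⟨(twos_props _).1, by simp⟩
      · exact ⟨(mid_props k).1, by simp; omega⟩
  have hne : List.replicate (2 * k + 1) 2 ≠ List.replicate k 2 ++ 1 :: List.replicate k 2 := by
    intro h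
    have h1 : 1 ∈ List.replicate (2 * k + 1) 2 := by rw [h]; simp
    simp at h1
  rw [bfun, this, finsum_mem_pair hne, (twos_props _).2, (mid_props k).2]
  norm_num

/-- In `L_sq`, `i(2ⁿ) = 1` and `i(2ⁿ 1 2ⁿ) = -1`; consequently `b(n) + b(n+1) = 1`
for every `n`, with `b(n) = 1` for `n` even and `b(n) = 0` for `n` odd. -/
theorem mult_bispecial_Lsq :
    (∀ n : ℕ, mult Lsq (List.replicate n 2) = 1 ∧
      mult Lsq (List.replicate n 2 ++ 1 :: List.replicate n 2) = -1) ∧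
    (∀ n : ℕ, bfun Lsq n + bfun Lsq (n+1) = 1) ∧
    (∀ n : ℕ, Even n → bfun Lsq n = 1) ∧
    (∀ n : ℕ, Odd n → bfun Lsq n = 0) := by
  refine ⟨fun n => ⟨(twos_props n).2, (mid_props n).2⟩, fun n => ?_, bfun_even, bfun_odd⟩
  rcases Nat.even_or_odd n with h | h
  · rw [bfun_even n h, bfun_odd _ h.add_one, add_zero]
  · rw [bfun_odd n h, bfun_even _ h.add_one, zero_add]
end

section
/- The complexity of the language L_hex satisfies p(n) = ⌊(5n² + 16n + 15)/12⌋ for every n ≥ 0. -/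
/-- `L_hex`: the factors of the periodic words `(2·3ⁿ)^ω` and `(2·3ⁿ·2·3ⁿ⁺¹)^ω` for `n ∈ ℕ`,
together with the factors of `1^ω`, over the alphabet `{1,2,3}`. -/
def Lhex : Set (List ℕ) :=
  {v | (∃ n : ℕ, IsFactorPer (2 :: List.replicate n 3) v) ∨
       (∃ n : ℕ, IsFactorPer (2 :: List.replicate n 3 ++ 2 :: List.replicate (n+1) 3) v) ∨
       IsFactorPer [1] v}

/-! ### Prefixes and canonical triples -/

/-- The letter at position `x` of the periodic word `(2·3^c·2·3^d)^ω`. -/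
def gLet (c d x : ℕ) : ℕ :=
  if x % (c + d + 2) = 0 ∨ x % (c + d + 2) = c + 1 then 2 else 3

/-- The letter at position `j` of `3^a·(2·3^c·2·3^d)^ω`, where `t = (a, c, d)`. -/
def hLet (t : ℕ × ℕ × ℕ) (j : ℕ) : ℕ :=
  if j < t.1 then 3 else gLet t.2.1 t.2.2 (j - t.1)

/-- The prefix of length `n` of `3^a·(2·3^c·2·3^d)^ω`, where `t = (a, c, d)`. -/
def hWord (n : ℕ) (t : ℕ × ℕ × ℕ) : List ℕ := (List.range n).map (hLet t)

lemma hLet_of_lt {a c d j : ℕ} (hj : j < a + c + d + 2) :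
    hLet (a, c, d) j = if j = a ∨ j = a + c + 1 then 2 else 3 := by
  unfold hLet gLet
  dsimp only
  by_cases h : j < a
  · rw [if_pos h, if_neg (by omega)]
  · rw [if_neg h, Nat.mod_eq_of_lt (by omega)]
    split_ifs <;> omega

lemma hLet_third (a c d : ℕ) : hLet (a, c, d) (a + c + d + 2) = 2 := by
  unfold hLet gLet
  dsimp only
  rw [if_neg (by omega), show a + c + d + 2 - a = c + d + 2 by omega, Nat.mod_self]
  simp

lemma hWord_eq_iff {n : ℕ} {t t' : ℕ × ℕ × ℕ} :
    hWord n t = hWord n t' ↔ ∀ j < n, hLet t j = hLet t' j := by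
  simp [hWord]

/-- The triple `(a, c, d)` is canonical for length `n`. The first alternative covers the words with
at most one `2`: `(n, n, n)` for `3^n` and `(a, n, n)` with `a < n` for `3^a·2·3^(n-a-1)`. In the second,
the `2`s at positions `a` and `a + c + 1` lie in the prefix and `d` has its largest admissible value
`c + 1`. In the third, `d` is smaller than that, and the third `2`, at `a + c + d + 2`, lies in the
prefix as well. -/
def Canon (n a c d : ℕ) : Prop :=
  a ≤ d ∧ c ≤ d + 1 ∧ d ≤ c + 1 ∧
    ((a ≤ n ∧ c = n ∧ d = n) ∨ (d = c + 1 ∧ a + c + 2 ≤ n) ∨ (d ≤ c ∧ a + c + d + 3 ≤ n))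

lemma canon_first {n a c d a' c' d' : ℕ} (h : Canon n a c d) (h' : Canon n a' c' d')
    (H : ∀ j < n, hLet (a, c, d) j = hLet (a', c', d') j) : a' ≤ a := by
  unfold Canon at h h'
  by_contra! hlt
  have := H a (by omega)
  rw [hLet_of_lt (by omega), hLet_of_lt (by omega), if_pos (by omega), if_neg (by omega)] at this
  omega

lemma canon_second {n a c d c' d' : ℕ} (h : Canon n a c d) (h' : Canon n a c' d')
    (H : ∀ j < n, hLet (a, c, d) j = hLet (a, c', d') j) : c' ≤ c := by
  unfold Canon at h h'
  by_contra! hlt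
  have := H (a + c + 1) (by omega)
  rw [hLet_of_lt (by omega), hLet_of_lt (by omega), if_pos (by omega), if_neg (by omega)] at this
  omega

lemma canon_third {n a c d d' : ℕ} (h : Canon n a c d) (h' : Canon n a c d')
    (H : ∀ j < n, hLet (a, c, d) j = hLet (a, c, d') j) : d' ≤ d := by
  unfold Canon at h h'
  by_contra! hlt
  have := H (a + c + d + 2) (by omega)
  rw [hLet_third, hLet_of_lt (by omega), if_neg (by omega)] at this
  omega

lemma canon_inj {n a c d a' c' d' : ℕ} (h : Canon n a c d) (h' : Canon n a' c' d')
    (H : hWord n (a, c, d) = hWord n (a', c', d')) : (a, c, d) = (a', c', d') := by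
  rw [hWord_eq_iff] at H
  have H' := fun j hj => (H j hj).symm
  obtain rfl := le_antisymm (canon_first h' h H') (canon_first h h' H)
  obtain rfl := le_antisymm (canon_second h' h H') (canon_second h h' H)
  obtain rfl := le_antisymm (canon_third h' h H') (canon_third h h' H)
  rfl

/-- Every admissible triple can be replaced by a canonical one without changing the prefix: lengths
of blocks of `3` that are cut off by the end of the prefix are set to their canonical values. -/
lemma exists_canon (n : ℕ) {a c d : ℕ} (h1 : a ≤ d) (h2 : c ≤ d + 1) (h3 : d ≤ c + 1) :
    ∃ a' c' d', Canon n a' c' d' ∧ hWord n (a, c, d) = hWord n (a', c', d') := by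
  simp only [hWord_eq_iff]
  have key : ∀ a' c' d', (∀ j < n, j < a + c + d + 2 ∧ j < a' + c' + d' + 2 ∧
      ((j = a ∨ j = a + c + 1) ↔ (j = a' ∨ j = a' + c' + 1))) →
      ∀ j < n, hLet (a, c, d) j = hLet (a', c', d') j := by
    intro a' c' d' h j hj
    obtain ⟨k1, k2, k3⟩ := h j hj
    rw [hLet_of_lt k1, hLet_of_lt k2]
    simp only [k3]
  by_cases c1 : n ≤ a
  · exact ⟨n, n, n, by unfold Canon; omega, key _ _ _ (by intro j hj; omega)⟩
  by_cases c2 : n ≤ a + c + 1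
  · exact ⟨a, n, n, by unfold Canon; omega, key _ _ _ (by intro j hj; omega)⟩
  by_cases c3 : d = c + 1 ∨ a + c + d + 3 ≤ n
  · exact ⟨a, c, d, by unfold Canon; omega, fun _ _ => rfl⟩
  · exact ⟨a, c, c + 1, by unfold Canon; omega, key _ _ _ (by intro j hj; omega)⟩

/-! ### Factors of periodic words -/

lemma length_powWord {A : Type*} (w : List A) (k : ℕ) :
    (powWord w k).length = k * w.length := by
  simp [powWord]

lemma powWord_getElem? {A : Type*} (w : List A) (k i : ℕ) (hi : i < k * w.length) :
    (powWord w k)[i]? = w[i % w.length]? := by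
  induction k generalizing i with
  | zero => simp at hi
  | succ k ih =>
    have e : powWord w (k + 1) = w ++ powWord w k := by
      simp [powWord, List.replicate_succ]
    rw [e]
    by_cases h : i < w.length
    · rw [List.getElem?_append_left h, Nat.mod_eq_of_lt h]
    · push Not at h
      rw [List.getElem?_append_right h, ih _ (by rw [Nat.succ_mul] at hi; omega),
        Nat.mod_eq_sub_mod h]

/-- A factor of `w^ω` is a window of the infinite word whose letter at `x` is `w[x % |w|]`. -/
lemma isFactorPer_iff {A : Type*} {w v : List A} (hw : w ≠ []) :
    IsFactorPer w v ↔ ∃ i, ∀ j < v.length, v[j]? = w[(i + j) % w.length]? := by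
  have hpos : 0 < w.length := List.length_pos_iff.2 hw
  constructor
  · rintro ⟨k, s, t, h⟩
    refine ⟨s.length, fun j hj => ?_⟩
    have hl := congrArg List.length h
    rw [length_powWord] at hl
    simp only [List.length_append] at hl
    rw [← powWord_getElem? w k _ (by omega), ← h, List.append_assoc,
      List.getElem?_append_right (by omega), List.getElem?_append_left (by omega)]
    congr 1; omega
  · rintro ⟨i, h⟩
    have hk : i + v.length ≤ (i + v.length) * w.length := Nat.le_mul_of_pos_right _ hpos
    refine ⟨i + v.length, ?_⟩
    have e : v = ((powWord w (i + v.length)).drop i).take v.length := by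
      apply List.ext_getElem?
      intro j
      by_cases hj : j < v.length
      · rw [List.getElem?_take_of_lt hj, List.getElem?_drop, powWord_getElem? _ _ _ (by omega),
          h j hj]
      · rw [List.getElem?_eq_none (by omega), List.getElem?_eq_none (by simp; omega)]
    have key : ((powWord w (i + v.length)).drop i).take v.length <:+: powWord w (i + v.length) :=
      (List.take_prefix _ _).isInfix.trans (List.drop_suffix _ _).isInfix
    rwa [← e] at key

/-- `v` is a window (a factor) of `(2·3^c·2·3^d)^ω`, expressed through letters. -/
def IsWindow (c d : ℕ) (v : List ℕ) : Prop :=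
  ∃ i, v = (List.range v.length).map (fun j => gLet c d (i + j))

lemma eq_map_range_iff {v : List ℕ} {f : ℕ → ℕ} :
    v = (List.range v.length).map f ↔ ∀ j < v.length, v[j]? = some (f j) := by
  constructor
  · intro h j hj
    rw [h]; simp [hj]
  · intro h
    apply List.ext_getElem?
    intro j
    by_cases hj : j < v.length
    · rw [h j hj]; simp [hj]
    · rw [List.getElem?_eq_none (by omega), List.getElem?_eq_none (by simp; omega)]

lemma isFactorPer_two (c d : ℕ) (v : List ℕ) :
    IsFactorPer (2 :: List.replicate c 3 ++ 2 :: List.replicate d 3) v ↔ IsWindow c d v := by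
  rw [isFactorPer_iff (by simp), IsWindow]
  simp only [eq_map_range_iff]
  have hl : (2 :: List.replicate c 3 ++ 2 :: List.replicate d 3).length = c + d + 2 := by
    simp; omega
  have key : ∀ x, (2 :: List.replicate c 3 ++ 2 :: List.replicate d 3)[x % (c + d + 2)]? =
      some (gLet c d x) := by
    intro x
    unfold gLet
    have := Nat.mod_lt x (show 0 < c + d + 2 by omega)
    generalize x % (c + d + 2) = r at *
    rcases lt_or_ge r (c + 1) with h | h
    · rw [List.getElem?_append_left (by simpa using h)]
      rcases r with _ | r
      · simp
      · rw [if_neg (by omega)]; simp [show r < c by omega]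
    · rw [List.getElem?_append_right (by simpa using h)]
      obtain ⟨s, rfl⟩ := Nat.exists_eq_add_of_le h
      rcases s with _ | s
      · simp
      · rw [if_neg (by omega)]
        simp [show c + 1 + (s + 1) - (c + 1) = s + 1 by omega, show s < d by omega]
  simp only [hl, key]

/-- `(2·3^c)^ω` and `(2·3^c·2·3^c)^ω` are the same word. -/
lemma isFactorPer_one (c : ℕ) (v : List ℕ) :
    IsFactorPer (2 :: List.replicate c 3) v ↔ IsWindow c c v := by
  rw [isFactorPer_iff (by simp), IsWindow]
  simp only [eq_map_range_iff]
  have hl : (2 :: List.replicate c 3).length = c + 1 := by simp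
  have key : ∀ x, (2 :: List.replicate c 3)[x % (c + 1)]? = some (gLet c c x) := by
    intro x
    unfold gLet
    have h1 := Nat.mod_lt x (show 0 < c + c + 2 by omega)
    have h2 : x % (c + 1) = x % (c + c + 2) % (c + 1) :=
      (Nat.mod_mod_of_dvd x ⟨2, by ring⟩).symm
    rw [h2]
    generalize x % (c + c + 2) = r at *
    rcases lt_or_ge r (c + 1) with h | h
    · rw [Nat.mod_eq_of_lt h]
      rcases r with _ | r
      · simp
      · rw [if_neg (by omega)]; simp [show r < c by omega]
    · rw [Nat.mod_eq_sub_mod h, Nat.mod_eq_of_lt (by omega)]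
      obtain ⟨s, rfl⟩ := Nat.exists_eq_add_of_le h
      rcases s with _ | s
      · simp
      · rw [if_neg (by omega)]
        simp [show c + 1 + (s + 1) - (c + 1) = s + 1 by omega, show s < c by omega]
  simp only [hl, key]

lemma isFactorPer_ones (v : List ℕ) :
    IsFactorPer [1] v ↔ v = List.replicate v.length 1 := by
  rw [isFactorPer_iff (by simp), List.eq_replicate_iff, List.forall_mem_iff_getElem]
  simp [Nat.mod_one]
  constructor
  · intro h i hi
    have := h i hi
    rwa [List.getElem?_eq_getElem hi, Option.some_inj] at this
  · intro h i hi
    rw [List.getElem?_eq_getElem hi, h i hi]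

lemma gLet_add_period (c d x : ℕ) : gLet c d (x + (c + d + 2)) = gLet c d x := by
  simp [gLet]

/-- Shifting `(2·3^c·2·3^d)^ω` by `c + 1` exchanges the two blocks. -/
lemma gLet_swap (c d x : ℕ) : gLet c d (x + (c + 1)) = gLet d c x := by
  unfold gLet
  rw [show d + c + 2 = c + d + 2 by ring, Nat.add_mod,
    Nat.mod_eq_of_lt (show c + 1 < c + d + 2 by omega)]
  have := Nat.mod_lt x (show 0 < c + d + 2 by omega)
  generalize x % (c + d + 2) = r at *
  rcases lt_or_ge (r + (c + 1)) (c + d + 2) with h | h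
  · rw [Nat.mod_eq_of_lt h]; exact if_congr (by omega) rfl rfl
  · rw [Nat.mod_eq_sub_mod h, Nat.mod_eq_of_lt (by omega)]; split_ifs <;> omega

lemma gLet_mod (c d i j : ℕ) : gLet c d (i + j) = gLet c d (i % (c + d + 2) + j) := by
  simp [gLet]

lemma isWindow_swap {c d : ℕ} {v : List ℕ} (h : IsWindow c d v) : IsWindow d c v := by
  obtain ⟨i, hi⟩ := h
  refine ⟨i + (d + 1), hi.trans ?_⟩
  congr 1; funext j
  rw [add_right_comm, gLet_swap]

lemma isWindow_hWord (n : ℕ) {a c d : ℕ} (h : a ≤ d) : IsWindow c d (hWord n (a, c, d)) := by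
  refine ⟨c + d + 2 - a, ?_⟩
  simp only [hWord, List.length_map, List.length_range]
  congr 1; funext j
  unfold hLet
  dsimp only
  split_ifs with hj
  · rw [gLet, Nat.mod_eq_of_lt (by omega), if_neg (by omega)]
  · rw [← gLet_add_period c d (j - a)]; congr 1; omega

/-- A window of `(2·3^c·2·3^d)^ω` starts inside one of the two kinds of blocks of `3` (possibly at its
end); `a` is the length of the part of that block contained in the window. -/
lemma exists_of_isWindow {c d : ℕ} {v : List ℕ} (h : IsWindow c d v) :
    (∃ a ≤ d, v = hWord v.length (a, c, d)) ∨ (∃ a ≤ c, v = hWord v.length (a, d, c)) := by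
  obtain ⟨i, hi⟩ := h
  simp only [gLet_mod c d i] at hi
  have hlt := Nat.mod_lt i (show 0 < c + d + 2 by omega)
  generalize i % (c + d + 2) = r at *
  rcases Nat.eq_zero_or_pos r with rfl | h0
  · refine Or.inl ⟨0, by omega, hi.trans ?_⟩
    unfold hWord; congr 1; funext j
    simp [hLet]
  rcases le_or_gt r (c + 1) with h1 | h1
  · refine Or.inr ⟨c + 1 - r, by omega, hi.trans ?_⟩
    unfold hWord; congr 1; funext j
    unfold hLet
    dsimp only
    split_ifs with hj
    · rw [gLet, Nat.mod_eq_of_lt (by omega), if_neg (by omega)]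
    · rw [← gLet_swap c d (j - _)]; congr 1; omega
  · refine Or.inl ⟨c + d + 2 - r, by omega, hi.trans ?_⟩
    unfold hWord; congr 1; funext j
    unfold hLet
    dsimp only
    split_ifs with hj
    · rw [gLet, Nat.mod_eq_of_lt (by omega), if_neg (by omega)]
    · rw [← gLet_add_period c d (j - _)]; congr 1; omega

/-- Description of `L_hex` by canonical triples. -/
lemma mem_Lhex_iff (v : List ℕ) : v ∈ Lhex ↔
    v = List.replicate v.length 1 ∨
      ∃ a c d, Canon v.length a c d ∧ v = hWord v.length (a, c, d) := by
  have cases : v ∈ Lhex ↔ (∃ n, IsWindow n n v) ∨ (∃ n, IsWindow n (n + 1) v) ∨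
      v = List.replicate v.length 1 := by
    simp only [Lhex, Set.mem_ofPred_eq, isFactorPer_one, isFactorPer_two, isFactorPer_ones]
  rw [cases]
  have fwd : ∀ c d, c ≤ d + 1 → d ≤ c + 1 → IsWindow c d v →
      ∃ a c d, Canon v.length a c d ∧ v = hWord v.length (a, c, d) := by
    intro c d h1 h2 h
    rcases exists_of_isWindow h with ⟨a, ha, e⟩ | ⟨a, ha, e⟩
    · obtain ⟨a', c', d', hC, e'⟩ := exists_canon v.length ha h1 h2
      exact ⟨a', c', d', hC, e.trans e'⟩
    · obtain ⟨a', c', d', hC, e'⟩ := exists_canon v.length ha h2 h1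
      exact ⟨a', c', d', hC, e.trans e'⟩
  constructor
  · rintro (⟨n, h⟩ | ⟨n, h⟩ | h)
    · exact Or.inr (fwd _ _ (by omega) (by omega) h)
    · exact Or.inr (fwd _ _ (by omega) (by omega) h)
    · exact Or.inl h
  · rintro (h | ⟨a, c, d, hC, e⟩)
    · exact Or.inr (Or.inr h)
    · have hw : IsWindow c d v := by
        rw [e]; exact isWindow_hWord _ hC.1
      obtain ⟨-, h1, h2, -⟩ := hC
      rcases (by omega : c = d ∨ d = c + 1 ∨ c = d + 1) with rfl | rfl | rfl
      · exact Or.inl ⟨_, hw⟩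
      · exact Or.inr (Or.inl ⟨_, hw⟩)
      · exact Or.inr (Or.inl ⟨_, isWindow_swap hw⟩)

/-! ### Counting the canonical triples -/

/-- The canonical triples of the second and third kind (`d = c + 1`, `d ≤ c`) whose last relevant
letter `2` is at position `j`, that is, `a + c + 1 = j`, respectively `a + c + d + 2 = j`. The three
parts correspond to `d = c + 1`, `c = d` and `c = d + 1`. -/
def newTriples (j : ℕ) : Finset (ℕ × ℕ × ℕ) :=
  ((Finset.range (if j = 0 then 0 else j / 2 + 1)).image fun a => (a, j - 1 - a, j - a)) ∪
    ((Finset.Ico (j / 3) (j / 2)).image fun k => (j - 2 * k - 2, k, k)) ∪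
    ((Finset.Ico ((j - 1) / 3) ((j - 1) / 2)).image fun k => (j - 2 * k - 3, k + 1, k))

lemma mem_newTriples {j a c d : ℕ} : (a, c, d) ∈ newTriples j ↔
    a ≤ d ∧ c ≤ d + 1 ∧ d ≤ c + 1 ∧
      ((d = c + 1 ∧ a + c + 1 = j) ∨ (d ≤ c ∧ a + c + d + 2 = j)) := by
  simp only [newTriples, Finset.mem_union, Finset.mem_image, Finset.mem_range, Finset.mem_Ico,
    Prod.mk.injEq]
  constructor
  · rintro ((⟨x, h, h'⟩ | ⟨x, h, h'⟩) | ⟨x, h, h'⟩)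
    · split_ifs at h <;> omega
    · omega
    · omega
  · rintro ⟨h1, h2, h3, (h | h)⟩
    · refine Or.inl (Or.inl ⟨a, ?_, ?_⟩)
      · rw [if_neg (by omega)]; omega
      · omega
    · rcases (by omega : c = d ∨ c = d + 1) with rfl | rfl
      · exact Or.inl (Or.inr ⟨c, by omega, by omega⟩)
      · exact Or.inr ⟨d, by omega, by omega⟩

lemma card_newTriples (j : ℕ) : (newTriples j).card =
    (if j = 0 then 0 else j / 2 + 1) + (j / 2 - j / 3) + ((j - 1) / 2 - (j - 1) / 3) := by
  unfold newTriples
  rw [Finset.card_union_of_disjoint, Finset.card_union_of_disjoint, Finset.card_image_of_injOn,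
    Finset.card_image_of_injOn, Finset.card_image_of_injOn]
  · simp
  · intro x _ y _ h
    simp only [Prod.mk.injEq] at h; omega
  · intro x _ y _ h
    simp only [Prod.mk.injEq] at h; omega
  · intro x _ y _ h
    simp only [Prod.mk.injEq] at h; omega
  · rw [Finset.disjoint_left]
    simp only [Finset.mem_image, Finset.mem_range, Finset.mem_Ico]
    rintro _ ⟨x, h, rfl⟩ ⟨y, h', e⟩
    simp only [Prod.mk.injEq] at e
    split_ifs at h <;> omega
  · rw [Finset.disjoint_left]
    simp only [Finset.mem_union, Finset.mem_image, Finset.mem_range, Finset.mem_Ico]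
    rintro _ (⟨x, h, rfl⟩ | ⟨x, h, rfl⟩) ⟨y, h', e⟩
    · simp only [Prod.mk.injEq] at e
      split_ifs at h <;> omega
    · simp only [Prod.mk.injEq] at e
      omega

/-- The finite set of canonical triples for length `n`. -/
def canonSet (n : ℕ) : Finset (ℕ × ℕ × ℕ) :=
  ((Finset.range (n + 1)).image fun a => (a, n, n)) ∪ (Finset.range n).biUnion newTriples

lemma mem_canonSet {n a c d : ℕ} : (a, c, d) ∈ canonSet n ↔ Canon n a c d := by
  simp only [canonSet, Finset.mem_union, Finset.mem_image, Finset.mem_range, Finset.mem_biUnion,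
    mem_newTriples, Prod.mk.injEq, Canon]
  constructor
  · rintro (⟨x, h, h'⟩ | ⟨j, h, h'⟩) <;> omega
  · rintro ⟨h1, h2, h3, (h | h | h)⟩
    · exact Or.inl ⟨a, by omega, by omega⟩
    · exact Or.inr ⟨a + c + 1, by omega, by omega⟩
    · exact Or.inr ⟨a + c + d + 2, by omega, by omega⟩

lemma card_canonSet (n : ℕ) :
    (canonSet n).card = n + 1 + ∑ j ∈ Finset.range n, (newTriples j).card := by
  unfold canonSet
  rw [Finset.card_union_of_disjoint, Finset.card_image_of_injective, Finset.card_range,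
    Finset.card_biUnion]
  · intro i _ j _ hij
    rw [Function.onFun, Finset.disjoint_left]
    rintro ⟨a, c, d⟩ h h'
    rw [mem_newTriples] at h h'
    omega
  · intro x y h
    simpa using h
  · rw [Finset.disjoint_left]
    rintro ⟨a, c, d⟩ h h'
    simp only [Finset.mem_image, Finset.mem_range, Finset.mem_biUnion, mem_newTriples,
      Prod.mk.injEq] at h h'
    obtain ⟨x, h⟩ := h
    obtain ⟨y, h'⟩ := h'
    omega

/-- The summand `1` accounts for the word `1^n`, which differs from all others when `1 ≤ n`. -/
lemma card_formula (n : ℕ) (hn : 1 ≤ n) :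
    1 + (canonSet n).card = (5 * n ^ 2 + 16 * n + 15) / 12 := by
  rw [card_canonSet]
  induction n, hn using Nat.le_induction with
  | base => simp [card_newTriples]
  | succ n hn ih =>
    rw [Finset.sum_range_succ, card_newTriples, if_neg (by omega)]
    -- With `n = 6m + r` and `r` fixed, everything is linear in `m` and `m ^ 2`.
    have hm := Nat.div_add_mod n 6
    have hr := Nat.mod_lt n (show 0 < 6 by omega)
    generalize n / 6 = m at *
    generalize n % 6 = r at *
    generalize ∑ j ∈ Finset.range n, (newTriples j).card = S at *
    subst hm
    ring_nf at ih ⊢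
    interval_cases r <;> ring_nf at ih ⊢ <;> omega

/-- The complexity of `L_hex` is `p(n) = ⌊(5n² + 16n + 15)/12⌋`. -/
theorem complexity_Lhex (n : ℕ) : comp Lhex n = (5*n^2 + 16*n + 15) / 12 := by
  have hset : {v : List ℕ | v ∈ Lhex ∧ v.length = n} =
      ↑(insert (List.replicate n 1) ((canonSet n).image (hWord n))) := by
    ext v
    simp only [Set.mem_ofPred_eq, Finset.coe_insert, Finset.coe_image, Set.mem_insert_iff,
      Set.mem_image, Finset.mem_coe, Prod.exists, mem_canonSet]
    constructor
    · rintro ⟨h, rfl⟩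
      rcases (mem_Lhex_iff v).1 h with h | ⟨a, c, d, hC, e⟩
      · exact Or.inl h
      · exact Or.inr ⟨a, c, d, hC, e.symm⟩
    · intro h
      have hl : v.length = n := by
        rcases h with rfl | ⟨a, c, d, -, rfl⟩ <;> simp [hWord]
      refine ⟨(mem_Lhex_iff v).2 ?_, hl⟩
      rw [hl]
      rcases h with h | ⟨a, c, d, hC, e⟩
      · exact Or.inl h
      · exact Or.inr ⟨a, c, d, hC, e.symm⟩
  unfold comp
  rw [hset, Set.ncard_coe_finset]
  rcases Nat.eq_zero_or_pos n with rfl | hn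
  -- For `n = 0` the empty word is both `1^0` and the prefix of the triple `(0, 0, 0)`.
  · simp [canonSet, hWord]
  · rw [Finset.card_insert_of_notMem, Finset.card_image_of_injOn, add_comm, card_formula n hn]
    · rintro ⟨a, c, d⟩ h ⟨a', c', d'⟩ h' e
      exact canon_inj (mem_canonSet.1 h) (mem_canonSet.1 h') e
    -- The first letter of a prefix is `2` or `3`, never `1`.
    · simp only [Finset.mem_image, not_exists, not_and]
      intro t _ e
      have := congrArg (fun l => l[0]?) e
      simp [hWord, hn, hLet, gLet] at this
      split_ifs at this <;> omega
end

section
/- For the language L_tri, the bispecial multiplicities are: i(1(21)ⁿ) = 1, i(1(21)ⁿ1(21)ⁿ) = 1, i(1(21)ⁿ1(21)ⁿ⁺¹) = i(1(21)ⁿ⁺¹1(21)ⁿ) = 0, i(1(21)ⁿ1(21)ⁿ1(21)ⁿ) = −1 and i(1(21)ⁿ1(21)ⁿ⁺¹1(21)ⁿ) = −1 for every n ∈ ℕ; consequently Σ_{i=n}^{n+11} b(i) = 5 for every n ≥ 0. -/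
/-- The word `1(21)ⁿ` over the alphabet `{1,2}`. -/
def tw (n : ℕ) : List ℕ := 1 :: (List.replicate n [2, 1]).flatten

/-- `L_tri`: the factors of the periodic words `(1(21)ⁿ)^ω` and `(1(21)ⁿ·1(21)ⁿ⁺¹)^ω`, `n ∈ ℕ`. -/
def Ltri : Set (List ℕ) :=
  {v | (∃ n : ℕ, IsFactorPer (tw n) v) ∨ (∃ n : ℕ, IsFactorPer (tw n ++ tw (n+1)) v)}

/-! ### Alternating words and blocks -/

/-- The alternating word `x y x y …` of length `N`. -/
def altW (x y : ℕ) : ℕ → List ℕ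
  | 0 => []
  | N + 1 => x :: altW y x N

/-- The suffix of length `a` of the left-infinite word `…2121`. -/
def sufW : ℕ → List ℕ
  | 0 => []
  | a + 1 => (if a % 2 = 0 then 1 else 2) :: sufW a

/-- The concatenation of the blocks `tw k` for `k` in the list `ns`. -/
def tws (ns : List ℕ) : List ℕ := (ns.map tw).flatten

/-- The word `S tw(k₁) ⋯ tw(kᵣ) P`, where `S` is the suffix of length `a` of `…2121` and `P` is the
prefix of length `b` of `1212…`. If `a` and `b` are positive, this is the general shape of a word
over `{1,2}` with a factor `11` and no factor `22`. -/
def blockW (a : ℕ) (ks : List ℕ) (b : ℕ) : List ℕ := sufW a ++ (tws ks ++ altW 1 2 b)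

/-- Two naturals at distance at most one. -/
def Near (x y : ℕ) : Prop := x ≤ y + 1 ∧ y ≤ x + 1

theorem altW_succ_append (x y N : ℕ) :
    altW x y (N + 1) = altW x y N ++ [if N % 2 = 0 then x else y] := by
  induction N generalizing x y with
  | zero => simp [altW]
  | succ N ih =>
    rw [altW, ih]
    simp only [altW, List.cons_append]
    congr 3
    rcases Nat.mod_two_eq_zero_or_one N with h | h <;> simp [Nat.add_mod, h]

theorem altW_length (x y N : ℕ) : (altW x y N).length = N := by
  induction N generalizing x y with
  | zero => rfl
  | succ N ih => simp [altW, ih]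

theorem sufW_length (a : ℕ) : (sufW a).length = a := by
  induction a with
  | zero => rfl
  | succ N ih => simp [sufW, ih]

theorem altW_prefix (x y : ℕ) {N M : ℕ} (h : N ≤ M) : altW x y N <+: altW x y M := by
  induction M, h using Nat.le_induction with
  | base => exact List.prefix_refl _
  | succ M _ ih =>
    rw [altW_succ_append]
    exact ih.trans (List.prefix_append _ _)

theorem sufW_suffix {a c : ℕ} (h : a ≤ c) : sufW a <:+ sufW c := by
  induction c, h using Nat.le_induction with
  | base => exact List.suffix_refl _
  | succ M _ ih => exact ih.trans (List.suffix_cons _ _)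

theorem tw_succ (n : ℕ) : tw (n + 1) = 1 :: 2 :: tw n := by
  simp [tw, List.replicate_succ]

theorem tw_eq_altW (n : ℕ) : tw n = altW 1 2 (2 * n + 1) := by
  induction n with
  | zero => rfl
  | succ n ih => rw [tw_succ, ih]; rfl

theorem tw_eq_sufW (n : ℕ) : tw n = sufW (2 * n + 1) := by
  induction n with
  | zero => rfl
  | succ n ih =>
    have h : 2 * (n + 1) + 1 = (2 * n + 1) + 1 + 1 := by ring
    have h1 : (2 * n + 1 + 1) % 2 = 0 := by omega
    have h2 : ¬ (2 * n + 1) % 2 = 0 := by omega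
    rw [h, sufW.eq_2 (2 * n + 1 + 1), if_pos h1, sufW.eq_2 (2 * n + 1), if_neg h2, tw_succ, ih]

theorem tw_length (n : ℕ) : (tw n).length = 2 * n + 1 := by
  rw [tw_eq_altW, altW_length]

@[simp] theorem tws_nil : tws [] = [] := rfl
@[simp] theorem tws_cons (n : ℕ) (ns : List ℕ) : tws (n :: ns) = tw n ++ tws ns := rfl
@[simp] theorem tws_append (l m : List ℕ) : tws (l ++ m) = tws l ++ tws m := by
  simp [tws]

/-- `L_tri` as a single family: both kinds of periodic words are concatenations of blocks whose
exponents alternate between two values at distance at most one. -/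
theorem mem_Ltri_iff (v : List ℕ) :
    v ∈ Ltri ↔ ∃ x y N, Near x y ∧ v <:+: tws (altW x y N) := by
  have h1 : ∀ n k, powWord (tw n) k = tws (altW n n k) := by
    intro n k
    induction k with
    | zero => rfl
    | succ k ih =>
      rw [altW, tws_cons, ← ih]; simp [powWord, List.replicate_succ]
  have h2 : ∀ n k, powWord (tw n ++ tw (n + 1)) k = tws (altW n (n + 1) (2 * k)) := by
    intro n k
    induction k with
    | zero => rfl
    | succ k ih =>
      rw [show 2 * (k + 1) = 2 * k + 1 + 1 by ring, altW, altW, tws_cons, tws_cons, ← ih]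
      simp [powWord, List.replicate_succ]
  have hpre : ∀ {l m : List ℕ}, l <+: m → tws l <:+: tws m := by
    rintro l m ⟨t, rfl⟩
    rw [tws_append]; exact (List.prefix_append _ _).isInfix
  constructor
  · rintro (⟨n, k, h⟩ | ⟨n, k, h⟩)
    · exact ⟨n, n, k, ⟨by omega, by omega⟩, h1 n k ▸ h⟩
    · exact ⟨n, n + 1, 2 * k, ⟨by omega, by omega⟩, h2 n k ▸ h⟩
  · rintro ⟨x, y, N, ⟨hxy, hyx⟩, h⟩
    rcases (by omega : x = y ∨ y = x + 1 ∨ x = y + 1) with rfl | rfl | rfl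
    · exact Or.inl ⟨x, N, h1 x N ▸ h⟩
    · refine Or.inr ⟨x, N, h2 x N ▸ h.trans (hpre (altW_prefix _ _ (by omega)))⟩
    · refine Or.inr ⟨y, N + 1, h2 y (N + 1) ▸ h.trans ?_⟩
      rw [show 2 * (N + 1) = (2 * N + 1) + 1 by ring, altW, tws_cons]
      exact (hpre (altW_prefix _ _ (by omega))).trans (List.suffix_append _ _).isInfix

theorem Ltri_of_infix {v w : List ℕ} (h : v <:+: w) (hw : w ∈ Ltri) : v ∈ Ltri := by
  rw [mem_Ltri_iff] at *
  obtain ⟨x, y, N, hn, h'⟩ := hw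
  exact ⟨x, y, N, hn, h.trans h'⟩

theorem tws_letters (ns : List ℕ) : ∀ x ∈ tws ns, x = 1 ∨ x = 2 := by
  have h : ∀ n, ∀ x ∈ tw n, x = 1 ∨ x = 2 := by
    intro n
    induction n with
    | zero => simp [tw]
    | succ n ih =>
      rw [tw_succ]; intro x hx
      simp only [List.mem_cons] at hx
      rcases hx with h | h | h
      · exact Or.inl h
      · exact Or.inr h
      · exact ih x h
  induction ns with
  | nil => simp
  | cons n ns ih =>
    intro x hx
    rw [tws_cons, List.mem_append] at hx
    exact hx.elim (h n x) (ih x)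

theorem tws_head (ns : List ℕ) : tws ns = [] ∨ ∃ z, tws ns = 1 :: z := by
  cases ns with
  | nil => exact Or.inl rfl
  | cons n ns => exact Or.inr ⟨_, rfl⟩

theorem tws_no22 (ns : List ℕ) : List.IsChain (fun x y => ¬ (x = 2 ∧ y = 2)) (tws ns) := by
  have key : ∀ n (Z : List ℕ), (Z = [] ∨ ∃ z, Z = 1 :: z) →
      List.IsChain (fun x y => ¬ (x = 2 ∧ y = 2)) Z →
      List.IsChain (fun x y => ¬ (x = 2 ∧ y = 2)) (tw n ++ Z) := by
    intro n Z hZ hc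
    induction n with
    | zero =>
      rcases hZ with rfl | ⟨z, rfl⟩
      · simp [tw]
      · simpa [tw] using hc
    | succ n ih =>
      rw [tw_succ]
      have : tw n = 1 :: (List.replicate n [2, 1]).flatten := rfl
      rw [this] at ih ⊢
      simpa using ih
  induction ns with
  | nil => simp
  | cons n ns ih => exact key n _ (tws_head ns) ih

theorem Ltri_letters {v : List ℕ} (h : v ∈ Ltri) : ∀ x ∈ v, x = 1 ∨ x = 2 := by
  obtain ⟨x, y, N, _, h⟩ := (mem_Ltri_iff v).1 h
  exact fun z hz => tws_letters _ z (h.subset hz)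

theorem no22 (u w : List ℕ) : u ++ 2 :: 2 :: w ∉ Ltri := by
  intro h
  obtain ⟨x, y, N, _, h⟩ := (mem_Ltri_iff _).1 h
  have := (tws_no22 _).infix h
  have h3 : [2, 2] <:+: u ++ 2 :: 2 :: w := ⟨u, w, by simp⟩
  simpa using this.infix h3

/-! ### Reading the exponents off a factor -/

theorem suffix_sufW {t : List ℕ} {c : ℕ} (h : t <:+ sufW c) : ∃ a ≤ c, t = sufW a := by
  induction c with
  | zero => exact ⟨0, le_rfl, by simpa [sufW] using h⟩
  | succ c ih =>
    rw [sufW, List.suffix_cons_iff] at h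
    rcases h with h | h
    · exact ⟨c + 1, le_rfl, h⟩
    · obtain ⟨a, ha, rfl⟩ := ih h
      exact ⟨a, by omega, rfl⟩

theorem suffix_tws {t : List ℕ} (ns : List ℕ) (h : t <:+ tws ns) (ht : t ≠ []) :
    ∃ xs k ys c, ns = xs ++ k :: ys ∧ c ≤ 2 * k ∧ t = sufW (c + 1) ++ tws ys := by
  induction ns with
  | nil => simp at h; exact absurd h ht
  | cons n ns ih =>
    by_cases hs : t <:+ tws ns
    · obtain ⟨xs, k, ys, c, rfl, hc, rfl⟩ := ih hs
      exact ⟨n :: xs, k, ys, c, rfl, hc, rfl⟩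
    · rw [tws_cons] at h
      rcases List.suffix_or_suffix_of_suffix h (List.suffix_append (tw n) (tws ns)) with h' | h'
      · exact absurd h' hs
      · obtain ⟨t', rfl⟩ := h'
        have h2 : t' <:+ tw n := by
          obtain ⟨s, hs⟩ := h
          rw [← List.append_assoc] at hs
          exact ⟨s, List.append_cancel_right hs⟩
        rw [tw_eq_sufW] at h2
        obtain ⟨a, ha, rfl⟩ := suffix_sufW h2
        cases a with
        | zero => exact absurd (by simp [sufW]) hs
        | succ a => exact ⟨[], n, ns, a, rfl, by omega, rfl⟩

/-- The first occurrence of `11` is located at the same place in two words with a common prefix. -/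
theorem sufW_sync {u Z : List ℕ} (hZ : Z = [] ∨ ∃ z, Z = 1 :: z) (a c : ℕ)
    (h : sufW (a + 1) ++ 1 :: u <+: sufW (c + 1) ++ Z) : a = c ∧ 1 :: u <+: Z := by
  induction a generalizing c with
  | zero =>
    cases c with
    | zero => exact ⟨rfl, by simpa [sufW] using h⟩
    | succ c =>
      exfalso
      simp only [sufW, List.cons_append, List.cons_prefix_cons, List.nil_append] at h
      obtain ⟨h1, h2, -⟩ := h
      grind
  | succ a ih =>
    cases c with
    | zero =>
      exfalso
      rcases hZ with rfl | ⟨z, rfl⟩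
      · simp [sufW] at h
      · simp only [sufW, List.cons_append, List.cons_prefix_cons, List.nil_append] at h
        obtain ⟨h1, h2, -⟩ := h
        grind
    | succ c =>
      rw [sufW, sufW.eq_2 (c + 1), List.cons_append, List.cons_append,
        List.cons_prefix_cons] at h
      obtain ⟨h1, h2⟩ := ih c h.2
      exact ⟨by omega, h2⟩

theorem altW_prefix_sync {Z : List ℕ} (hZ : Z = [] ∨ ∃ z, Z = 1 :: z) (b n : ℕ)
    (h : altW 1 2 b <+: tw n ++ Z) : b ≤ 2 * n + 1 := by
  induction n generalizing b with
  | zero =>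
    by_contra hb
    obtain ⟨b, rfl⟩ : ∃ b', b = b' + 2 := ⟨b - 2, by omega⟩
    rcases hZ with rfl | ⟨z, rfl⟩ <;> simp [altW, tw] at h
  | succ n ih =>
    by_contra hb
    obtain ⟨b, rfl⟩ : ∃ b', b = b' + 2 := ⟨b - 2, by omega⟩
    rw [tw_succ] at h
    simp only [altW, List.cons_append, List.cons_prefix_cons, true_and] at h
    have := ih b h
    omega

theorem tw_sync {u Z : List ℕ} (hZ : Z = [] ∨ ∃ z, Z = 1 :: z) (k n : ℕ)
    (h : tw k ++ 1 :: u <+: tw n ++ Z) : k = n ∧ 1 :: u <+: Z := by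
  rw [tw_eq_sufW, tw_eq_sufW] at h
  obtain ⟨h1, h2⟩ := sufW_sync hZ _ _ h
  exact ⟨by omega, h2⟩

theorem tws_append_altW_head (ks : List ℕ) (b : ℕ) :
    ∃ u, tws ks ++ altW 1 2 (b + 1) = 1 :: u := by
  cases ks with
  | nil => exact ⟨_, rfl⟩
  | cons k ks => exact ⟨_, rfl⟩

theorem tws_prefix_sync (ks ns : List ℕ) (b : ℕ)
    (h : tws ks ++ altW 1 2 (b + 1) <+: tws ns) :
    ∃ k ys, ns = ks ++ k :: ys ∧ b ≤ 2 * k := by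
  induction ks generalizing ns with
  | nil =>
    cases ns with
    | nil => simp [altW] at h
    | cons n ns =>
      have := altW_prefix_sync (tws_head ns) _ _ h
      exact ⟨n, ns, rfl, by omega⟩
  | cons k ks ih =>
    cases ns with
    | nil => simp [altW] at h
    | cons n ns =>
      obtain ⟨u, hu⟩ := tws_append_altW_head ks b
      rw [tws_cons, List.append_assoc, hu] at h
      obtain ⟨rfl, h2⟩ := tw_sync (tws_head ns) _ _ h
      rw [← hu] at h2
      obtain ⟨k', ys, rfl, hb⟩ := ih ns h2
      exact ⟨k', ys, rfl, hb⟩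

theorem altW_infix {l : List ℕ} {x y N : ℕ} (hn : Near x y) (h : l <:+: altW x y N) :
    ∃ x y N, Near x y ∧ l = altW x y N := by
  have hp : ∀ (l : List ℕ) (x y N : ℕ), l <+: altW x y N → ∃ N', l = altW x y N' := by
    intro l
    induction l with
    | nil => intros; exact ⟨0, rfl⟩
    | cons a l ih =>
      intro x y N h
      cases N with
      | zero => simp [altW] at h
      | succ N =>
        rw [altW, List.cons_prefix_cons] at h
        obtain ⟨N', rfl⟩ := ih _ _ _ h.2
        exact ⟨N' + 1, by rw [h.1, altW]⟩
  induction N generalizing x y with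
  | zero => exact ⟨x, y, 0, hn, by simpa [altW] using h⟩
  | succ N ih =>
    rw [altW, List.infix_cons_iff] at h
    rcases h with h | h
    · obtain ⟨N', h⟩ := hp l x y (N + 1) h
      exact ⟨x, y, N', hn, h⟩
    · exact ih ⟨hn.2, hn.1⟩ h

/-- A word containing `11` is in `L_tri` exactly when its sequence of complete blocks can be
extended by one exponent at each end to an alternating sequence whose outer blocks are long enough
to cover the incomplete blocks. -/
theorem blockW_mem_iff (a : ℕ) (ks : List ℕ) (b : ℕ) :
    blockW (a + 1) ks (b + 1) ∈ Ltri ↔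
      ∃ k k', a ≤ 2 * k ∧ b ≤ 2 * k' ∧ ∃ x y N, Near x y ∧ k :: (ks ++ [k']) = altW x y N := by
  rw [mem_Ltri_iff]
  constructor
  · rintro ⟨x, y, N, hn, h⟩
    rw [List.infix_iff_prefix_suffix] at h
    obtain ⟨t, h1, h2⟩ := h
    have ht : t ≠ [] := by
      rintro rfl
      simp [blockW, sufW] at h1
    obtain ⟨xs, k, ys, c, hns, hc, rfl⟩ := suffix_tws _ h2 ht
    obtain ⟨u, hu⟩ := tws_append_altW_head ks b
    rw [blockW, hu] at h1
    obtain ⟨rfl, h3⟩ := sufW_sync (tws_head ys) _ _ h1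
    rw [← hu] at h3
    obtain ⟨k', zs, rfl, hb⟩ := tws_prefix_sync _ _ _ h3
    refine ⟨k, k', hc, hb, altW_infix hn (N := N) ?_⟩
    exact ⟨xs, zs, by rw [hns]; simp⟩
  · rintro ⟨k, k', ha, hb, x, y, N, hn, h⟩
    refine ⟨x, y, N, hn, ?_⟩
    rw [← h]
    obtain ⟨s, hs⟩ := sufW_suffix (show a + 1 ≤ 2 * k + 1 by omega)
    obtain ⟨p, hp⟩ := altW_prefix 1 2 (show b + 1 ≤ 2 * k' + 1 by omega)
    refine ⟨s, p, ?_⟩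
    rw [tws_cons, tws_append, tws_cons, tws_nil, tw_eq_sufW k, tw_eq_altW k', ← hs, ← hp]
    simp [blockW]

theorem altW_mem (b : ℕ) : altW 1 2 b ∈ Ltri := by
  rw [mem_Ltri_iff]
  refine ⟨b, b, 1, ⟨by omega, by omega⟩, ?_⟩
  simp only [altW, tws_cons, tws_nil, List.append_nil, tw_eq_altW]
  exact (altW_prefix 1 2 (show b ≤ 2 * b + 1 by omega)).isInfix

theorem cons_altW_mem (b : ℕ) : 2 :: altW 1 2 b ∈ Ltri :=
  Ltri_of_infix (List.suffix_cons 1 _).isInfix (altW_mem (b + 2))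

/-- Words with exactly one factor `11` and no factor `22` are all in `L_tri`. -/
theorem blockW_zero_mem (a b : ℕ) : blockW (a + 1) [] (b + 1) ∈ Ltri := by
  rw [blockW_mem_iff]
  exact ⟨a + b, a + b, by omega, by omega, a + b, a + b, 2, ⟨by omega, by omega⟩, rfl⟩

theorem blockW_one_mem (a k b : ℕ) :
    blockW (a + 1) [k] (b + 1) ∈ Ltri ↔ a ≤ 2 * k + 2 ∧ b ≤ 2 * k + 2 := by
  rw [blockW_mem_iff]
  constructor
  · rintro ⟨k0, k1, ha, hb, x, y, N, hn, h⟩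
    obtain rfl : N = 3 := by simpa [altW_length] using (congrArg List.length h).symm
    simp only [altW, List.cons_append, List.nil_append, List.cons.injEq] at h
    unfold Near at hn
    omega
  · rintro ⟨ha, hb⟩
    exact ⟨k + 1, k + 1, by omega, by omega, k + 1, k, 3, ⟨by omega, by omega⟩, rfl⟩

theorem blockW_two_mem (a p q b : ℕ) :
    blockW (a + 1) [p, q] (b + 1) ∈ Ltri ↔ Near p q ∧ a ≤ 2 * q ∧ b ≤ 2 * p := by
  rw [blockW_mem_iff]
  constructor
  · rintro ⟨k0, k1, ha, hb, x, y, N, hn, h⟩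
    obtain rfl : N = 4 := by simpa [altW_length] using (congrArg List.length h).symm
    simp only [altW, List.cons_append, List.nil_append, List.cons.injEq] at h
    unfold Near at *
    omega
  · rintro ⟨hn, ha, hb⟩
    exact ⟨q, p, ha, hb, q, p, 4, ⟨hn.2, hn.1⟩, rfl⟩

theorem blockW_three_mem {p q : ℕ} (h : Near p q) : blockW 1 [p, q, p] 1 ∈ Ltri := by
  rw [blockW_mem_iff 0 _ 0]
  exact ⟨q, q, by omega, by omega, q, p, 5, ⟨h.2, h.1⟩, rfl⟩

/-- A word with at least two complete blocks has at most one left extension: the letter `1` completes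
a block `tw i`, which forces `i = q`, while the letter `2` requires `i < q`. -/
theorem blockW_left_conflict (i p q b : ℕ) (l : List ℕ)
    (h2 : blockW (2 * i + 2) (p :: q :: l) (b + 1) ∈ Ltri)
    (h1 : blockW 1 (i :: p :: q :: l) (b + 1) ∈ Ltri) : False := by
  rw [blockW_mem_iff] at h2
  rw [blockW_mem_iff 0] at h1
  obtain ⟨k0, k1, ha, -, x, y, N, -, h⟩ := h2
  obtain ⟨k0', k1', -, -, x', y', N', -, h'⟩ := h1
  match N, h with
  | N + 3, h =>
    match N', h' with
    | N' + 4, h' =>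
      simp only [altW, List.cons_append, List.cons.injEq] at h h'
      omega
    | 0, h' | 1, h' | 2, h' | 3, h' => simp [altW] at h'
  | 0, h | 1, h | 2, h => simp [altW] at h

/-! ### Extensions by one letter -/

theorem one_cons_blockW (i : ℕ) (ks : List ℕ) (b : ℕ) :
    1 :: blockW (2 * i + 1) ks b = blockW 1 (i :: ks) b := by
  rw [blockW, blockW, ← tw_eq_sufW]; simp [sufW]

theorem two_cons_blockW (i : ℕ) (ks : List ℕ) (b : ℕ) :
    2 :: blockW (2 * i + 1) ks b = blockW (2 * i + 2) ks b := by
  have h : ¬ (2 * i + 1) % 2 = 0 := by omega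
  rw [blockW, blockW, sufW.eq_2 (2 * i + 1), if_neg h, List.cons_append]

theorem blockW_append_one (a : ℕ) (ks : List ℕ) (j : ℕ) :
    blockW a ks (2 * j + 1) ++ [1] = blockW a (ks ++ [j]) 1 := by
  rw [blockW, blockW, ← tw_eq_altW]; simp [altW]

theorem blockW_append_two (a : ℕ) (ks : List ℕ) (j : ℕ) :
    blockW a ks (2 * j + 1) ++ [2] = blockW a ks (2 * j + 2) := by
  have h : ¬ (2 * j + 1) % 2 = 0 := by omega
  rw [blockW, blockW, altW_succ_append 1 2 (2 * j + 1), if_neg h]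
  simp

theorem tw_append_tw (i j : ℕ) : tw i ++ tw j = blockW (2 * i + 1) [] (2 * j + 1) := by
  simp [blockW, ← tw_eq_altW, ← tw_eq_sufW]

theorem tw_append_tw_append_tw (i k j : ℕ) :
    tw i ++ tw k ++ tw j = blockW (2 * i + 1) [k] (2 * j + 1) := by
  simp [blockW, ← tw_eq_altW, ← tw_eq_sufW]

/-! ### Multiplicities -/

open Classical in
theorem mL_Ltri (v : List ℕ) :
    mL Ltri v = (if 1 :: v ∈ Ltri then 1 else 0) + (if 2 :: v ∈ Ltri then 1 else 0) := by
  have h : {a : ℕ | a :: v ∈ Ltri} = ↑(({1, 2} : Finset ℕ).filter (fun a => a :: v ∈ Ltri)) := by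
    ext a
    simp only [Set.mem_ofPred_eq, Finset.coe_filter, Finset.mem_insert, Finset.mem_singleton]
    exact ⟨fun h => ⟨Ltri_letters h a (by simp), h⟩, fun h => h.2⟩
  rw [mL, h, Set.ncard_coe_finset, Finset.card_filter, Finset.sum_pair (by norm_num)]

open Classical in
theorem mR_Ltri (v : List ℕ) :
    mR Ltri v = (if v ++ [1] ∈ Ltri then 1 else 0) + (if v ++ [2] ∈ Ltri then 1 else 0) := by
  have h : {a : ℕ | v ++ [a] ∈ Ltri} =
      ↑(({1, 2} : Finset ℕ).filter (fun a => v ++ [a] ∈ Ltri)) := by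
    ext a
    simp only [Set.mem_ofPred_eq, Finset.coe_filter, Finset.mem_insert, Finset.mem_singleton]
    exact ⟨fun h => ⟨Ltri_letters h a (by simp), h⟩, fun h => h.2⟩
  rw [mR, h, Set.ncard_coe_finset, Finset.card_filter, Finset.sum_pair (by norm_num)]

open Classical in
theorem mB_Ltri (v : List ℕ) :
    mB Ltri v = ((if 1 :: (v ++ [1]) ∈ Ltri then 1 else 0) +
      (if 1 :: (v ++ [2]) ∈ Ltri then 1 else 0)) +
      ((if 2 :: (v ++ [1]) ∈ Ltri then 1 else 0) +
      (if 2 :: (v ++ [2]) ∈ Ltri then 1 else 0)) := by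
  have h : {p : ℕ × ℕ | p.1 :: (v ++ [p.2]) ∈ Ltri} =
      ↑((({1, 2} : Finset ℕ) ×ˢ ({1, 2} : Finset ℕ)).filter
        (fun p => p.1 :: (v ++ [p.2]) ∈ Ltri)) := by
    ext a
    simp only [Set.mem_ofPred_eq, Finset.coe_filter, Finset.mem_insert, Finset.mem_singleton,
      Finset.mem_product]
    exact ⟨fun h => ⟨⟨Ltri_letters h a.1 (by simp), Ltri_letters h a.2 (by simp)⟩, h⟩,
      fun h => h.2⟩
  rw [mB, h, Set.ncard_coe_finset, Finset.card_filter, Finset.sum_product,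
    Finset.sum_pair (by norm_num), Finset.sum_pair (by norm_num), Finset.sum_pair (by norm_num)]

theorem bispecial_iff (v : List ℕ) :
    Bispecial Ltri v ↔ (1 :: v ∈ Ltri ∧ 2 :: v ∈ Ltri) ∧ v ++ [1] ∈ Ltri ∧ v ++ [2] ∈ Ltri := by
  rw [Bispecial, mL_Ltri, mR_Ltri]
  constructor
  · rintro ⟨-, h1, h2⟩
    split_ifs at h1 h2 <;> first | omega | tauto
  · rintro ⟨⟨h1, h2⟩, h3, h4⟩
    simp only [h1, h2, h3, h4, if_true]
    exact ⟨Ltri_of_infix (List.suffix_cons 1 _).isInfix h1, le_rfl, le_rfl⟩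

theorem two_cons_tw (n : ℕ) : 2 :: tw n = sufW (2 * n + 2) := by
  have h : ¬ (2 * n + 1) % 2 = 0 := by omega
  rw [sufW.eq_2 (2 * n + 1), if_neg h, tw_eq_sufW]

theorem tw_append_two (n : ℕ) : tw n ++ [2] = altW 1 2 (2 * n + 2) := by
  have h : ¬ (2 * n + 1) % 2 = 0 := by omega
  rw [altW_succ_append 1 2 (2 * n + 1), if_neg h, tw_eq_altW]

theorem tw_ext (n : ℕ) : (1 :: tw n ∈ Ltri ∧ 2 :: tw n ∈ Ltri) ∧
    (tw n ++ [1] ∈ Ltri ∧ tw n ++ [2] ∈ Ltri) ∧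
    (1 :: (tw n ++ [1]) ∈ Ltri ∧ 1 :: (tw n ++ [2]) ∈ Ltri) ∧
    2 :: (tw n ++ [1]) ∈ Ltri ∧ 2 :: (tw n ++ [2]) ∈ Ltri := by
  have h11 : 1 :: (tw n ++ [1]) ∈ Ltri := by
    have : 1 :: (tw n ++ [1]) = blockW 1 [n] 1 := by simp [blockW, sufW, altW]
    rw [this, blockW_one_mem 0 n 0]; omega
  have h22 : 2 :: (tw n ++ [2]) ∈ Ltri := by rw [tw_append_two]; exact cons_altW_mem _
  have h12 : 1 :: (tw n ++ [2]) ∈ Ltri := by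
    rw [tw_append_two]; exact blockW_zero_mem 0 (2 * n + 1)
  have h21 : 2 :: (tw n ++ [1]) ∈ Ltri := by
    rw [← List.cons_append, two_cons_tw]; exact blockW_zero_mem (2 * n + 1) 0
  refine ⟨⟨Ltri_of_infix ?_ h11, Ltri_of_infix ?_ h22⟩,
    ⟨Ltri_of_infix (List.suffix_cons _ _).isInfix h11,
      Ltri_of_infix (List.suffix_cons _ _).isInfix h12⟩, ⟨h11, h12⟩, h21, h22⟩
  · exact (List.prefix_append (1 :: tw n) [1]).isInfix
  · exact (List.prefix_append (2 :: tw n) [2]).isInfix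

theorem mult_tw (n : ℕ) : mult Ltri (tw n) = 1 := by
  obtain ⟨⟨h1, h2⟩, ⟨h3, h4⟩, ⟨h5, h6⟩, h7, h8⟩ := tw_ext n
  rw [mult, mL_Ltri, mR_Ltri, mB_Ltri]
  simp [h1, h2, h3, h4, h5, h6, h7, h8]

/-- The extensions of a word with exactly one factor `11`. -/
theorem ext_zero (i j : ℕ) :
    (1 :: blockW (2 * i + 1) [] (2 * j + 1) ∈ Ltri ↔ j ≤ i + 1) ∧
    (2 :: blockW (2 * i + 1) [] (2 * j + 1) ∈ Ltri) ∧
    (blockW (2 * i + 1) [] (2 * j + 1) ++ [1] ∈ Ltri ↔ i ≤ j + 1) ∧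
    (blockW (2 * i + 1) [] (2 * j + 1) ++ [2] ∈ Ltri) ∧
    (1 :: (blockW (2 * i + 1) [] (2 * j + 1) ++ [1]) ∈ Ltri ↔ Near i j) ∧
    (1 :: (blockW (2 * i + 1) [] (2 * j + 1) ++ [2]) ∈ Ltri ↔ j ≤ i) ∧
    (2 :: (blockW (2 * i + 1) [] (2 * j + 1) ++ [1]) ∈ Ltri ↔ i ≤ j) ∧
    (2 :: (blockW (2 * i + 1) [] (2 * j + 1) ++ [2]) ∈ Ltri) := by
  simp only [blockW_append_one, blockW_append_two, one_cons_blockW, two_cons_blockW,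
    List.nil_append]
  refine ⟨?_, blockW_zero_mem _ _, ?_, blockW_zero_mem _ _, ?_, ?_, ?_, blockW_zero_mem _ _⟩
  · rw [blockW_one_mem 0]; omega
  · rw [blockW_one_mem _ _ 0]; omega
  · rw [blockW_two_mem 0 _ _ 0]; simp
  · rw [blockW_one_mem 0]; omega
  · rw [blockW_one_mem _ _ 0]; omega

/-- The extensions of a word with exactly one complete block between two factors `11`. -/
theorem ext_one (i k j : ℕ) :
    (1 :: blockW (2 * i + 1) [k] (2 * j + 1) ∈ Ltri ↔ Near i k ∧ j ≤ i) ∧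
    (2 :: blockW (2 * i + 1) [k] (2 * j + 1) ∈ Ltri ↔ i ≤ k ∧ j ≤ k + 1) ∧
    (blockW (2 * i + 1) [k] (2 * j + 1) ++ [1] ∈ Ltri ↔ Near k j ∧ i ≤ j) ∧
    (blockW (2 * i + 1) [k] (2 * j + 1) ++ [2] ∈ Ltri ↔ i ≤ k + 1 ∧ j ≤ k) ∧
    (1 :: (blockW (2 * i + 1) [k] (2 * j + 1) ++ [2]) ∈ Ltri ↔ Near i k ∧ j < i) ∧
    (2 :: (blockW (2 * i + 1) [k] (2 * j + 1) ++ [1]) ∈ Ltri ↔ Near k j ∧ i < j) ∧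
    (2 :: (blockW (2 * i + 1) [k] (2 * j + 1) ++ [2]) ∈ Ltri ↔ i ≤ k ∧ j ≤ k) := by
  simp only [blockW_append_one, blockW_append_two, one_cons_blockW, two_cons_blockW,
    List.cons_append, List.nil_append]
  refine ⟨?_, ?_, ?_, ?_, ?_, ?_, ?_⟩
  · rw [blockW_two_mem 0]; unfold Near; omega
  · rw [blockW_one_mem]; omega
  · rw [blockW_two_mem _ _ _ 0]; unfold Near; omega
  · rw [blockW_one_mem]; omega
  · rw [blockW_two_mem 0]; unfold Near; omega
  · rw [blockW_two_mem _ _ _ 0]; unfold Near; omega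
  · rw [blockW_one_mem]; omega

theorem one_ext_one {i k : ℕ} (h : Near i k) :
    1 :: (blockW (2 * i + 1) [k] (2 * i + 1) ++ [1]) ∈ Ltri := by
  rw [blockW_append_one, one_cons_blockW]
  exact blockW_three_mem h

theorem mult_tw_tw (n : ℕ) : mult Ltri (tw n ++ tw n) = 1 := by
  obtain ⟨h1, h2, h3, h4, h5, h6, h7, h8⟩ := ext_zero n n
  rw [tw_append_tw, mult, mL_Ltri, mR_Ltri, mB_Ltri]
  simp [h1, h2, h3, h4, h5, h6, h7, h8, Near]

theorem mult_tw_tw_succ (n : ℕ) : mult Ltri (tw n ++ tw (n + 1)) = 0 := by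
  obtain ⟨h1, h2, h3, h4, h5, h6, h7, h8⟩ := ext_zero n (n + 1)
  rw [tw_append_tw, mult, mL_Ltri, mR_Ltri, mB_Ltri]
  have : n ≤ n + 1 + 1 := by omega
  simp [h1, h2, h3, h4, h5, h6, h7, h8, Near, this]

theorem mult_tw_succ_tw (n : ℕ) : mult Ltri (tw (n + 1) ++ tw n) = 0 := by
  obtain ⟨h1, h2, h3, h4, h5, h6, h7, h8⟩ := ext_zero (n + 1) n
  rw [tw_append_tw, mult, mL_Ltri, mR_Ltri, mB_Ltri]
  have : n ≤ n + 1 + 1 := by omega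
  simp [h1, h2, h3, h4, h5, h6, h7, h8, Near, this]

theorem mult_three {i k : ℕ} (h : Near i k) (hik : i ≤ k) :
    mult Ltri (tw i ++ tw k ++ tw i) = -1 ∧ Bispecial Ltri (tw i ++ tw k ++ tw i) := by
  obtain ⟨h1, h2, h3, h4, h6, h7, h8⟩ := ext_one i k i
  have h5 := one_ext_one h
  have h' : Near k i := ⟨h.2, h.1⟩
  have hle : i ≤ k + 1 := by omega
  rw [tw_append_tw_append_tw, bispecial_iff, mult, mL_Ltri, mR_Ltri, mB_Ltri]
  simp [h1, h2, h3, h4, h5, h6, h7, h8, h, h', hik, hle]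

theorem mult_nil : mult Ltri [] = 0 := by
  have h1 : [1] ∈ Ltri := altW_mem 1
  have h2 : [2] ∈ Ltri := cons_altW_mem 0
  have h3 : [1, 1] ∈ Ltri := blockW_zero_mem 0 0
  have h4 : [1, 2] ∈ Ltri := altW_mem 2
  have h5 : [2, 1] ∈ Ltri := cons_altW_mem 1
  have h6 : [2, 2] ∉ Ltri := no22 [] []
  rw [mult, mL_Ltri, mR_Ltri, mB_Ltri]
  simp [h1, h2, h3, h4, h5, h6]

/-! ### Classification of the bispecial words -/

/-- Every word of `L_tri` is alternating or contains `11` and is cut into blocks there. -/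
theorem Ltri_shape {v : List ℕ} (hv : v ∈ Ltri) :
    (∃ b, v = altW 1 2 b) ∨ (∃ b, v = 2 :: altW 1 2 b) ∨
      ∃ a ks b, v = blockW (a + 1) ks (b + 1) := by
  induction v with
  | nil => exact Or.inl ⟨0, rfl⟩
  | cons x v ih =>
    have hv' : v ∈ Ltri := Ltri_of_infix (List.suffix_cons x v).isInfix hv
    rcases Ltri_letters hv x (by simp) with rfl | rfl
    · rcases ih hv' with ⟨b, rfl⟩ | ⟨b, rfl⟩ | ⟨a, ks, b, rfl⟩
      · cases b with
        | zero => exact Or.inl ⟨1, rfl⟩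
        | succ b => exact Or.inr (Or.inr ⟨0, [], b, rfl⟩)
      · exact Or.inl ⟨b + 2, rfl⟩
      · rcases Nat.even_or_odd' a with ⟨i, rfl | rfl⟩
        · exact Or.inr (Or.inr ⟨0, i :: ks, b, one_cons_blockW i ks _⟩)
        · refine Or.inr (Or.inr ⟨2 * i + 2, ks, b, ?_⟩)
          have h : (2 * i + 2) % 2 = 0 := by omega
          rw [blockW, blockW, sufW.eq_2 (2 * i + 2), if_pos h, List.cons_append]
    · rcases ih hv' with ⟨b, rfl⟩ | ⟨b, rfl⟩ | ⟨a, ks, b, rfl⟩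
      · exact Or.inr (Or.inl ⟨b, rfl⟩)
      · exact absurd hv (no22 [] _)
      · rcases Nat.even_or_odd' a with ⟨i, rfl | rfl⟩
        · exact Or.inr (Or.inr ⟨2 * i + 1, ks, b, two_cons_blockW i ks _⟩)
        · exfalso
          rw [← two_cons_blockW] at hv
          exact no22 [] _ hv

theorem bispecial_cases {v : List ℕ} (hv : Bispecial Ltri v) :
    v = [] ∨ (∃ n, v = tw n) ∨ (∃ n, v = tw n ++ tw n) ∨ (∃ n, v = tw n ++ tw (n + 1)) ∨
      (∃ n, v = tw (n + 1) ++ tw n) ∨ (∃ n, v = tw n ++ tw n ++ tw n) ∨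
      (∃ n, v = tw n ++ tw (n + 1) ++ tw n) := by
  have hvL := hv.1
  rw [bispecial_iff] at hv
  obtain ⟨⟨h1, h2⟩, h3, h4⟩ := hv
  -- A word starting or ending with `2` is not bispecial, so the outer lengths are odd.
  rcases Ltri_shape hvL with ⟨b, rfl⟩ | ⟨b, rfl⟩ | ⟨a, ks, b, rfl⟩
  · rcases Nat.even_or_odd' b with ⟨i, rfl | rfl⟩
    · cases i with
      | zero => exact Or.inl rfl
      | succ i =>
        exfalso
        rw [show 2 * (i + 1) = 2 * i + 2 by ring, ← tw_append_two, List.append_assoc] at h4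
        exact no22 _ [] h4
    · exact Or.inr (Or.inl ⟨i, (tw_eq_altW i).symm⟩)
  · exact absurd h2 (no22 [] _)
  · rcases Nat.even_or_odd' a with ⟨i, rfl | rfl⟩
    swap
    · rw [← two_cons_blockW] at h2
      exact absurd h2 (no22 [] _)
    rcases Nat.even_or_odd' b with ⟨j, rfl | rfl⟩
    swap
    · rw [← blockW_append_two, List.append_assoc] at h4
      exact absurd h4 (no22 _ [])
    match ks with
    | [] =>
      have h1' := (ext_zero i j).1.1 h1
      have h3' := (ext_zero i j).2.2.1.1 h3
      rw [← tw_append_tw]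
      rcases (by omega : i = j ∨ j = i + 1 ∨ i = j + 1) with rfl | rfl | rfl
      · exact Or.inr (Or.inr (Or.inl ⟨i, rfl⟩))
      · exact Or.inr (Or.inr (Or.inr (Or.inl ⟨i, rfl⟩)))
      · exact Or.inr (Or.inr (Or.inr (Or.inr (Or.inl ⟨j, rfl⟩))))
    | [k] =>
      obtain ⟨e1, e2, e3, e4, -⟩ := ext_one i k j
      have h1' := e1.1 h1
      have h2' := e2.1 h2
      have h3' := e3.1 h3
      have h4' := e4.1 h4
      rw [← tw_append_tw_append_tw]
      unfold Near at *
      obtain rfl : i = j := by omega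
      rcases (by omega : k = i ∨ k = i + 1) with rfl | rfl
      · exact Or.inr (Or.inr (Or.inr (Or.inr (Or.inr (Or.inl ⟨k, rfl⟩)))))
      · exact Or.inr (Or.inr (Or.inr (Or.inr (Or.inr (Or.inr ⟨i, rfl⟩)))))
    | p :: q :: l =>
      exfalso
      rw [one_cons_blockW] at h1
      rw [two_cons_blockW] at h2
      exact blockW_left_conflict i p q _ l h2 h1

theorem bispecial_tw (n : ℕ) : Bispecial Ltri (tw n) := by
  rw [bispecial_iff]
  exact ⟨(tw_ext n).1, (tw_ext n).2.1⟩

theorem bispecial_tw_tw (n : ℕ) : Bispecial Ltri (tw n ++ tw n) := by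
  obtain ⟨h1, h2, h3, h4, -⟩ := ext_zero n n
  rw [bispecial_iff, tw_append_tw, h1, h3]
  exact ⟨⟨by omega, h2⟩, by omega, h4⟩

theorem near_self (n : ℕ) : Near n n := ⟨by omega, by omega⟩
theorem near_succ (n : ℕ) : Near n (n + 1) := ⟨by omega, by omega⟩

/-- The bispecial words of length `N` with nonzero multiplicity. -/
theorem bispecial_mult_ne_zero_iff (N : ℕ) (v : List ℕ) :
    ((Bispecial Ltri v ∧ v.length = N) ∧ mult Ltri v ≠ 0) ↔
      (∃ n, N = 2 * n + 1 ∧ v = tw n) ∨ (∃ n, N = 4 * n + 2 ∧ v = tw n ++ tw n) ∨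
      (∃ n, N = 6 * n + 3 ∧ v = tw n ++ tw n ++ tw n) ∨
      (∃ n, N = 6 * n + 5 ∧ v = tw n ++ tw (n + 1) ++ tw n) := by
  constructor
  · rintro ⟨⟨hb, rfl⟩, hm⟩
    rcases bispecial_cases hb with rfl | ⟨n, rfl⟩ | ⟨n, rfl⟩ | ⟨n, rfl⟩ | ⟨n, rfl⟩ | ⟨n, rfl⟩ |
      ⟨n, rfl⟩
    · exact absurd mult_nil hm
    · exact Or.inl ⟨n, tw_length n, rfl⟩
    · exact Or.inr (Or.inl ⟨n, by simp [tw_length]; omega, rfl⟩)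
    · exact absurd (mult_tw_tw_succ n) hm
    · exact absurd (mult_tw_succ_tw n) hm
    · exact Or.inr (Or.inr (Or.inl ⟨n, by simp [tw_length]; omega, rfl⟩))
    · exact Or.inr (Or.inr (Or.inr ⟨n, by simp [tw_length]; omega, rfl⟩))
  · rintro (⟨n, rfl, rfl⟩ | ⟨n, rfl, rfl⟩ | ⟨n, rfl, rfl⟩ | ⟨n, rfl, rfl⟩)
    · exact ⟨⟨bispecial_tw n, tw_length n⟩, by rw [mult_tw]; norm_num⟩
    · exact ⟨⟨bispecial_tw_tw n, by simp [tw_length]; omega⟩, by rw [mult_tw_tw]; norm_num⟩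
    · obtain ⟨hm, hb⟩ := mult_three (near_self n) le_rfl
      exact ⟨⟨hb, by simp [tw_length]; omega⟩, by rw [hm]; norm_num⟩
    · obtain ⟨hm, hb⟩ := mult_three (near_succ n) (Nat.le_succ n)
      exact ⟨⟨hb, by simp [tw_length]; omega⟩, by rw [hm]; norm_num⟩

theorem bfun_eq_sum (N : ℕ) (T : Finset (List ℕ))
    (h : ∀ v, v ∈ T ↔ ((Bispecial Ltri v ∧ v.length = N) ∧ mult Ltri v ≠ 0)) :
    bfun Ltri N = ∑ v ∈ T, mult Ltri v := by
  rw [bfun]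
  apply finsum_mem_eq_sum_of_inter_support_eq
  ext v
  simp only [Set.mem_inter_iff, Set.mem_ofPred_eq, Function.mem_support, Finset.mem_coe, h]
  tauto

/-- An alternating word differs from a concatenation of three blocks, which contains `11`. -/
theorem tw_ne (m i k j : ℕ) : tw m ≠ tw i ++ tw k ++ tw j := by
  intro h
  have h1 : tw i ++ 1 :: (List.replicate k [2, 1]).flatten ++ tw j <+: tw m ++ [] := by
    rw [List.append_nil, h]; exact List.prefix_refl _
  rw [List.append_assoc, List.cons_append] at h1
  simpa using (tw_sync (Or.inl rfl) _ _ h1).2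

/-- Every odd length carries `tw k` with multiplicity `1`; in lengths `3` and `5` modulo `6` it is
cancelled by a triple block word of multiplicity `-1`. -/
theorem bfun_Ltri (N : ℕ) :
    bfun Ltri N = (if N % 6 = 1 then 1 else 0) + (if N % 4 = 2 then 1 else 0) := by
  rcases (by omega : N % 4 = 0 ∨ N % 4 = 2 ∨ N % 6 = 1 ∨ N % 6 = 3 ∨ N % 6 = 5) with
    h | h | h | h | h
  · rw [bfun_eq_sum N ∅]
    · rw [if_neg (by omega), if_neg (by omega)]; rfl
    · intro v
      rw [bispecial_mult_ne_zero_iff]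
      simp only [Finset.notMem_empty, false_iff]
      rintro (⟨n, hn, -⟩ | ⟨n, hn, -⟩ | ⟨n, hn, -⟩ | ⟨n, hn, -⟩) <;> omega
  · obtain ⟨n, rfl⟩ : ∃ n, N = 4 * n + 2 := ⟨N / 4, by omega⟩
    rw [bfun_eq_sum _ {tw n ++ tw n}]
    · rw [Finset.sum_singleton, mult_tw_tw, if_neg (by omega), if_pos (by omega)]; rfl
    · intro v
      rw [bispecial_mult_ne_zero_iff, Finset.mem_singleton]
      constructor
      · rintro rfl
        exact Or.inr (Or.inl ⟨n, rfl, rfl⟩)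
      · rintro (⟨m, hm, rfl⟩ | ⟨m, hm, rfl⟩ | ⟨m, hm, rfl⟩ | ⟨m, hm, rfl⟩) <;>
          first | (exfalso; omega) | rw [show n = m by omega]
  · obtain ⟨n, rfl⟩ : ∃ n, N = 6 * n + 1 := ⟨N / 6, by omega⟩
    rw [bfun_eq_sum _ {tw (3 * n)}]
    · rw [Finset.sum_singleton, mult_tw, if_pos (by omega), if_neg (by omega)]; rfl
    · intro v
      rw [bispecial_mult_ne_zero_iff, Finset.mem_singleton]
      constructor
      · rintro rfl
        exact Or.inl ⟨3 * n, by omega, rfl⟩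
      · rintro (⟨m, hm, rfl⟩ | ⟨m, hm, rfl⟩ | ⟨m, hm, rfl⟩ | ⟨m, hm, rfl⟩) <;>
          first | (exfalso; omega) | rw [show m = 3 * n by omega]
  · obtain ⟨n, rfl⟩ : ∃ n, N = 6 * n + 3 := ⟨N / 6, by omega⟩
    rw [bfun_eq_sum _ {tw (3 * n + 1), tw n ++ tw n ++ tw n}]
    · rw [Finset.sum_pair (tw_ne _ _ _ _), mult_tw, (mult_three (near_self n) le_rfl).1,
        if_neg (by omega), if_neg (by omega)]; rfl
    · intro v
      rw [bispecial_mult_ne_zero_iff, Finset.mem_insert, Finset.mem_singleton]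
      constructor
      · rintro (rfl | rfl)
        · exact Or.inl ⟨3 * n + 1, by omega, rfl⟩
        · exact Or.inr (Or.inr (Or.inl ⟨n, rfl, rfl⟩))
      · rintro (⟨m, hm, rfl⟩ | ⟨m, hm, rfl⟩ | ⟨m, hm, rfl⟩ | ⟨m, hm, rfl⟩)
        · obtain rfl : m = 3 * n + 1 := by omega
          exact Or.inl rfl
        · omega
        · obtain rfl : n = m := by omega
          exact Or.inr rfl
        · omega
  · obtain ⟨n, rfl⟩ : ∃ n, N = 6 * n + 5 := ⟨N / 6, by omega⟩
    rw [bfun_eq_sum _ {tw (3 * n + 2), tw n ++ tw (n + 1) ++ tw n}]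
    · rw [Finset.sum_pair (tw_ne _ _ _ _), mult_tw,
        (mult_three (near_succ n) (Nat.le_succ n)).1, if_neg (by omega), if_neg (by omega)]; rfl
    · intro v
      rw [bispecial_mult_ne_zero_iff, Finset.mem_insert, Finset.mem_singleton]
      constructor
      · rintro (rfl | rfl)
        · exact Or.inl ⟨3 * n + 2, by omega, rfl⟩
        · exact Or.inr (Or.inr (Or.inr ⟨n, rfl, rfl⟩))
      · rintro (⟨m, hm, rfl⟩ | ⟨m, hm, rfl⟩ | ⟨m, hm, rfl⟩ | ⟨m, hm, rfl⟩)
        · obtain rfl : m = 3 * n + 2 := by omega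
          exact Or.inl rfl
        · omega
        · omega
        · obtain rfl : n = m := by omega
          exact Or.inr rfl

/-- The multiplicities of the bispecial words of `L_tri`: `i(1(21)ⁿ) = 1`,
`i(1(21)ⁿ1(21)ⁿ) = 1`, `i(1(21)ⁿ1(21)ⁿ⁺¹) = i(1(21)ⁿ⁺¹1(21)ⁿ) = 0`,
`i(1(21)ⁿ1(21)ⁿ1(21)ⁿ) = -1`, `i(1(21)ⁿ1(21)ⁿ⁺¹1(21)ⁿ) = -1`; consequently
`Σ_{i=n}^{n+11} b(i) = 5` for every `n`. -/
theorem mult_bispecial_Ltri :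
    (∀ n : ℕ,
      mult Ltri (tw n) = 1 ∧
      mult Ltri (tw n ++ tw n) = 1 ∧
      mult Ltri (tw n ++ tw (n+1)) = 0 ∧
      mult Ltri (tw (n+1) ++ tw n) = 0 ∧
      mult Ltri (tw n ++ tw n ++ tw n) = -1 ∧
      mult Ltri (tw n ++ tw (n+1) ++ tw n) = -1) ∧
    (∀ n : ℕ, ∑ i ∈ Finset.range 12, bfun Ltri (n + i) = 5) := by
  refine ⟨fun n => ⟨mult_tw n, mult_tw_tw n, mult_tw_tw_succ n, mult_tw_succ_tw n,
    (mult_three (near_self n) le_rfl).1, (mult_three (near_succ n) (Nat.le_succ n)).1⟩,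
    fun n => ?_⟩
  simp only [bfun_Ltri]
  rw [Finset.sum_add_distrib]
  have h6 : ∑ i ∈ Finset.range 12, (if (n + i) % 6 = 1 then (1 : ℤ) else 0) = 2 := by
    have hmod : ∀ i, (n + i) % 6 = (n % 6 + i) % 6 := fun i => by omega
    simp only [hmod]
    have hlt : n % 6 < 6 := Nat.mod_lt _ (by norm_num)
    generalize n % 6 = r at hlt
    interval_cases r <;> decide
  have h4 : ∑ i ∈ Finset.range 12, (if (n + i) % 4 = 2 then (1 : ℤ) else 0) = 3 := by
    have hmod : ∀ i, (n + i) % 4 = (n % 4 + i) % 4 := fun i => by omega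
    simp only [hmod]
    have hlt : n % 4 < 4 := Nat.mod_lt _ (by norm_num)
    generalize n % 4 = r at hlt
    interval_cases r <;> decide
  rw [h6, h4]; norm_num
end
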